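/- Suppose: g is bounded above; g* is differentiable with |（g*)'(ω)| ≤ C_g |g*(ω)| for all ω (some constant C_g); there exists ω_0 > 0 such that the argument ρ(ω) = arg(φ*(ω)) is twice continuously differentiable for |ω| > ω_0 with |ρ(ω)|, |ρ'(ω)|, |ρ''(ω)| ≤ ρ̄ < ∞; |g*(ω)| ≤ C_{g2} (ω²+1)^{−α/2} for all ω with C_{g2} > 0, α ≥ 0; and |φ*(ω)| ≥ C_{φ1} (ω²+1)^{−a/2} for all ω with C_{φ1} > 0 and a < α + 1/2. Then for all s ≥ 0, B > 0 there is a constant C > 0 (independent of n) such that the minimax risk satisfies R_n(Ω_s(B)) ≥ C · n^{−(2s+2a−1)/(2s+2α)} for all sufficiently large n. -/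

import Mathlib

open MeasureTheory Finset

/-- Fourier transform `t*(ω) = ∫ e^{iωx} t(x) dx` of a real-valued function. -/
noncomputable def ft (t : ℝ → ℝ) (ω : ℝ) : ℂ :=
  ∫ x : ℝ, Complex.exp (Complex.I * (ω : ℂ) * (x : ℂ)) * (t x : ℂ)

/-! The proof is Le Cam's two-point method. Start from a density with a Cauchy tail and a small
Sobolev norm, and let `u` be a small oscillating function of integral `0`. The two hypotheses
replace a small fraction of the mass of that density by the positive, respectively the negative,
part of `u`, smoothed by a Gaussian. The spectrum of `u` has height `A` and lies in `±[m, 2m]`, with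
a phase that cancels the phase of `φ*`, so the two values of `Φ` differ by an amount of order
`A m^(1-a)`. Since `g*` and its derivative are `O(m^(-α))` there, Plancherel, applied to the
spectrum and to its derivative, bounds the difference of the observed densities in `L²` with weight
`1 + y²`; because the observed densities have Cauchy tails, this is a bound of order `A² m^(1-2α)`
on their `χ²` distance. The rate comes from taking `A² m^(1+2s) ≍ 1`, the constraint set by the
Sobolev ball, and `n A² m^(1-2α) ≍ 1`, which keeps the hypotheses indistinguishable. -/

namespace Deconvolution

open scoped Convolution FourierTransform

section FourierTransform

/-- The Fourier transform `ω ↦ ∫ e^{iωx} F(x) dx` of a complex-valued function, in the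
normalization of `ft` rather than the `e^{-2πiωx}` normalization of `𝓕`. -/
noncomputable def cft (F : ℝ → ℂ) (ω : ℝ) : ℂ :=
  ∫ x : ℝ, Complex.exp (Complex.I * (ω : ℂ) * (x : ℂ)) * F x

lemma ft_eq_cft (t : ℝ → ℝ) : ft t = cft fun x => (t x : ℂ) := rfl

lemma norm_exp_I_mul_mul (ω x : ℝ) : ‖Complex.exp (Complex.I * ω * x)‖ = 1 := by
  rw [show Complex.I * ω * x = Complex.I * ((ω * x : ℝ) : ℂ) by push_cast; ring,
    Complex.norm_exp_I_mul_ofReal]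

lemma norm_cft_le (F : ℝ → ℂ) (ω : ℝ) : ‖cft F ω‖ ≤ ∫ x, ‖F x‖ :=
  (norm_integral_le_integral_norm _).trans_eq <| by
    simp only [norm_mul, norm_exp_I_mul_mul, one_mul]

lemma integrable_exp_mul {F : ℝ → ℂ} (hF : Integrable F) (ω : ℝ) :
    Integrable fun x : ℝ => Complex.exp (Complex.I * ω * x) * F x :=
  hF.bdd_mul (by fun_prop) (.of_forall fun x => (norm_exp_I_mul_mul ω x).le)

lemma cft_add {F G : ℝ → ℂ} (hF : Integrable F) (hG : Integrable G) (ω : ℝ) :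
    cft (fun x => F x + G x) ω = cft F ω + cft G ω := by
  simp only [cft, mul_add]
  exact integral_add (integrable_exp_mul hF ω) (integrable_exp_mul hG ω)

lemma cft_const_mul (c : ℂ) (F : ℝ → ℂ) (ω : ℝ) : cft (fun x => c * F x) ω = c * cft F ω := by
  simp only [cft, ← integral_const_mul, mul_left_comm]

lemma cft_conj (F : ℝ → ℂ) (ω : ℝ) :
    cft (fun x => starRingEnd ℂ (F x)) ω = starRingEnd ℂ (cft F (-ω)) := by
  simp only [cft, ← integral_conj, map_mul, map_neg, ← Complex.exp_conj, Complex.conj_I,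
    Complex.conj_ofReal, Complex.ofReal_neg, neg_mul, mul_neg, neg_neg]

lemma cft_eq_fourier (F : ℝ → ℂ) (ω : ℝ) : cft F ω = 𝓕 F (-(2 * Real.pi)⁻¹ * ω) := by
  rw [Real.fourier_eq' F]
  refine integral_congr_ae (.of_forall fun x => ?_)
  simp only [smul_eq_mul, RCLike.inner_apply, conj_trivial]
  congr 2
  push_cast
  field_simp [Complex.ofReal_ne_zero.2 Real.pi_ne_zero]

lemma fourier_eq_cft (F : ℝ → ℂ) (ξ : ℝ) : 𝓕 F ξ = cft F (-(2 * Real.pi) * ξ) := by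
  rw [cft_eq_fourier]
  field_simp

lemma continuous_fourier {F : ℝ → ℂ} (hF : Integrable F) : Continuous (𝓕 F) :=
  VectorFourier.fourierIntegral_continuous Real.continuous_fourierChar continuous_inner hF

lemma continuous_cft {F : ℝ → ℂ} (hF : Integrable F) : Continuous (cft F) := by
  have := continuous_fourier hF
  rw [funext (cft_eq_fourier F)]
  fun_prop

lemma norm_cft_deriv {F : ℝ → ℂ} (hF : Integrable F) (hd : Differentiable ℝ F)
    (hF' : Integrable (deriv F)) (ω : ℝ) : ‖cft (deriv F) ω‖ = |ω| * ‖cft F ω‖ := by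
  rw [cft_eq_fourier, cft_eq_fourier, Real.fourier_deriv hF hd hF', norm_smul]
  congr 1
  simp only [norm_mul, Complex.norm_ofNat, Complex.norm_real, Complex.norm_I, Real.norm_eq_abs,
    abs_mul, abs_neg, abs_inv, abs_of_pos Real.pi_pos, Nat.abs_ofNat]
  field_simp

lemma cft_cft {F : ℝ → ℂ} (hc : Continuous F) (hF : Integrable F) (hF' : Integrable (cft F))
    (x : ℝ) : cft (cft F) x = 2 * Real.pi * F (-x) := by
  have hi : Integrable (𝓕 F) := by
    rw [funext (fourier_eq_cft F)]
    exact hF'.comp_mul_left' (neg_ne_zero.2 Real.two_pi_pos.ne')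
  rw [← congrFun (Continuous.fourierInv_fourier_eq hc hF hi) (-x), Real.fourierInv_eq']
  have hscale := Measure.integral_comp_mul_left (fun v : ℝ =>
    Complex.exp (↑(2 * Real.pi * inner ℝ v (-x)) * Complex.I) • 𝓕 F v) (-(2 * Real.pi)⁻¹)
  have habs : |(-(2 * Real.pi)⁻¹)⁻¹| = 2 * Real.pi := by
    rw [inv_neg, inv_inv, abs_neg, abs_of_pos Real.two_pi_pos]
  rw [habs, Complex.real_smul, Complex.ofReal_mul, Complex.ofReal_ofNat] at hscale
  rw [← hscale, cft]
  refine integral_congr_ae (.of_forall fun ω => ?_)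
  simp only [smul_eq_mul, ← cft_eq_fourier, RCLike.inner_apply, conj_trivial]
  congr 2
  push_cast
  field_simp [Complex.ofReal_ne_zero.2 Real.pi_ne_zero]

end FourierTransform

section Plancherel

open SchwartzMap in
/-- Both sides are the Fourier transform of `F` as a tempered distribution, so they have the same
pairing with every test function. -/
lemma coeFn_fourier_toLp_ae_eq {F : ℝ → ℂ} (h1 : Integrable F) (h2 : MemLp F 2) :
    (𝓕 (h2.toLp F) : Lp ℂ 2 (volume : Measure ℝ)) =ᵐ[volume] 𝓕 F := by
  refine ae_eq_of_integral_contDiff_smul_eq ((Lp.memLp _).locallyIntegrable (by norm_num))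
    (continuous_fourier h1).locallyIntegrable fun χ hχ hχc => ?_
  have hχc' : HasCompactSupport fun x => (χ x : ℂ) := hχc.comp_left Complex.ofReal_zero
  let Ψ : 𝓢(ℝ, ℂ) := hχc'.toSchwartzMap (Complex.ofRealCLM.contDiff.comp hχ)
  have hdist := congrArg (fun D : TemperedDistribution ℝ ℂ => D Ψ)
    (Lp.fourier_toTemperedDistribution_eq (h2.toLp F))
  simp only [TemperedDistribution.fourier_apply, Lp.toTemperedDistribution_apply] at hdist
  have hflip := VectorFourier.integral_fourierIntegral_smul_eq_flip (L := innerₗ ℝ) (μ := volume)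
    (ν := volume) (f := (Ψ : ℝ → ℂ)) (g := F) Real.continuous_fourierChar continuous_inner
    Ψ.integrable h1
  rw [flip_innerₗ] at hflip
  calc ∫ x, χ x • (𝓕 (h2.toLp F) : Lp ℂ 2 (volume : Measure ℝ)) x
      = ∫ x, (𝓕 Ψ : 𝓢(ℝ, ℂ)) x • (h2.toLp F) x := hdist.symm
    _ = ∫ x, 𝓕 (Ψ : ℝ → ℂ) x • F x :=
        integral_congr_ae (h2.coeFn_toLp.mono fun x hx => by simp only [hx, fourier_coe])
    _ = ∫ x, χ x • 𝓕 F x := hflip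

lemma integral_norm_sq_coeFn (F : Lp ℂ 2 (volume : Measure ℝ)) :
    ∫ x, ‖F x‖ ^ 2 = ‖F‖ ^ 2 := by
  rw [← @inner_self_eq_norm_sq ℂ, L2.inner_def, ← integral_re (L2.integrable_inner _ _)]
  simp only [inner_self_eq_norm_sq]

lemma integral_norm_sq_fourier {F : ℝ → ℂ} (h1 : Integrable F) (h2 : MemLp F 2) :
    ∫ ξ, ‖𝓕 F ξ‖ ^ 2 = ∫ x, ‖F x‖ ^ 2 := by
  calc ∫ ξ, ‖𝓕 F ξ‖ ^ 2
      = ∫ ξ, ‖(𝓕 (h2.toLp F) : Lp ℂ 2 (volume : Measure ℝ)) ξ‖ ^ 2 :=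
        integral_congr_ae ((coeFn_fourier_toLp_ae_eq h1 h2).mono fun ξ hξ => by simp only [hξ])
    _ = ∫ x, ‖h2.toLp F x‖ ^ 2 := by
        rw [integral_norm_sq_coeFn, Lp.norm_fourier_eq, ← integral_norm_sq_coeFn]
    _ = ∫ x, ‖F x‖ ^ 2 := integral_congr_ae (h2.coeFn_toLp.mono fun x hx => by simp only [hx])

lemma integrable_norm_sq_cft {F : ℝ → ℂ} (h1 : Integrable F) (h2 : MemLp F 2) :
    Integrable fun ω => ‖cft F ω‖ ^ 2 := by
  have h𝓕 : MemLp (𝓕 F) 2 := (memLp_congr_ae (coeFn_fourier_toLp_ae_eq h1 h2)).1 (Lp.memLp _)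
  simp only [cft_eq_fourier]
  exact ((memLp_two_iff_integrable_sq_norm h𝓕.1).1 h𝓕).comp_mul_left'
    (neg_ne_zero.2 (inv_ne_zero Real.two_pi_pos.ne'))

theorem integral_norm_sq_cft {F : ℝ → ℂ} (h1 : Integrable F) (h2 : MemLp F 2) :
    ∫ ω, ‖cft F ω‖ ^ 2 = 2 * Real.pi * ∫ x, ‖F x‖ ^ 2 := by
  simp only [cft_eq_fourier]
  rw [Measure.integral_comp_mul_left (fun ξ => ‖𝓕 F ξ‖ ^ 2), integral_norm_sq_fourier h1 h2,
    inv_neg, inv_inv, abs_neg, abs_of_pos Real.two_pi_pos, smul_eq_mul]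

lemma one_add_sq_mul_norm_sq_cft {F : ℝ → ℂ} (hF : Integrable F) (hd : Differentiable ℝ F)
    (hF' : Integrable (deriv F)) (ω : ℝ) :
    (1 + ω ^ 2) * ‖cft F ω‖ ^ 2 = ‖cft F ω‖ ^ 2 + ‖cft (deriv F) ω‖ ^ 2 := by
  rw [norm_cft_deriv hF hd hF', mul_pow, sq_abs, add_mul, one_mul]

/-- Cauchy–Schwarz against the weight `(1 + x²)⁻¹`, whose integral is `π`. -/
lemma sq_integral_norm_le {F : ℝ → ℂ} (hF : AEStronglyMeasurable F)
    (hi : Integrable fun x => (1 + x ^ 2) * ‖F x‖ ^ 2) :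
    Integrable F ∧ (∫ x, ‖F x‖) ^ 2 ≤ Real.pi * ∫ x, (1 + x ^ 2) * ‖F x‖ ^ 2 := by
  set J := ∫ x, (1 + x ^ 2) * ‖F x‖ ^ 2
  have hquad (t x : ℝ) : 2 * t * ‖F x‖ ≤ (1 + x ^ 2) * ‖F x‖ ^ 2 + t ^ 2 * (1 + x ^ 2)⁻¹ := by
    have hx : (0 : ℝ) < 1 + x ^ 2 := by positivity
    have : (1 + x ^ 2) * ‖F x‖ ^ 2 + t ^ 2 * (1 + x ^ 2)⁻¹ - 2 * t * ‖F x‖ =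
        ((1 + x ^ 2) * ‖F x‖ - t) ^ 2 / (1 + x ^ 2) := by field_simp; ring
    linarith [div_nonneg (sq_nonneg ((1 + x ^ 2) * ‖F x‖ - t)) hx.le]
  have hI (t : ℝ) : Integrable fun x : ℝ => (1 + x ^ 2) * ‖F x‖ ^ 2 + t ^ 2 * (1 + x ^ 2)⁻¹ :=
    hi.add (integrable_inv_one_add_sq.const_mul _)
  have hF1 : Integrable F := (hI 1).mono' hF (.of_forall fun x => by
    linarith [hquad 1 x, norm_nonneg (F x)])
  refine ⟨hF1, ?_⟩
  have key (t : ℝ) : 2 * t * ∫ x, ‖F x‖ ≤ J + t ^ 2 * Real.pi := by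
    have := integral_mono (hF1.norm.const_mul (2 * t)) (hI t) (hquad t)
    rwa [integral_const_mul, integral_add hi (integrable_inv_one_add_sq.const_mul _),
      integral_const_mul, integral_univ_inv_one_add_sq] at this
  have hopt := key ((∫ x, ‖F x‖) / Real.pi)
  have : (∫ x, ‖F x‖) ^ 2 / Real.pi ≤ J := by
    have e : 2 * ((∫ x, ‖F x‖) / Real.pi) * (∫ x, ‖F x‖) -
        ((∫ x, ‖F x‖) / Real.pi) ^ 2 * Real.pi = (∫ x, ‖F x‖) ^ 2 / Real.pi := by
      field_simp; ring
    linarith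
  rwa [div_le_iff₀' Real.pi_pos] at this

end Plancherel

section Bumps

lemma memLp_of_norm_le_of_support_subset {F : ℝ → ℂ} {a b M : ℝ}
    (hm : AEStronglyMeasurable F) (hF : ∀ x, ‖F x‖ ≤ M) (hs : Function.support F ⊆ Set.Icc a b)
    (p : ENNReal) : MemLp F p := by
  rw [← Set.indicator_eq_self.2 hs, memLp_indicator_iff_restrict measurableSet_Icc]
  exact .of_bound hm.restrict M (.of_forall hF)

lemma integral_norm_sq_le_of_support_subset {F : ℝ → ℂ} {a b M : ℝ} (hab : a ≤ b)
    (hF : ∀ x, ‖F x‖ ≤ M) (hs : Function.support F ⊆ Set.Icc a b) :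
    ∫ x, ‖F x‖ ^ 2 ≤ M ^ 2 * (b - a) := by
  have hout : ∀ x ∉ Set.Icc a b, ‖F x‖ ^ 2 = 0 := fun x hx => by
    rw [Function.notMem_support.1 fun h => hx (hs h), norm_zero, zero_pow two_ne_zero]
  have hsq : ∀ x ∈ Set.Icc a b, ‖‖F x‖ ^ 2‖ ≤ M ^ 2 := fun x _ => by
    rw [norm_pow, norm_norm]
    exact pow_le_pow_left₀ (norm_nonneg _) (hF x) 2
  rw [← setIntegral_eq_integral_of_forall_compl_eq_zero hout]
  calc ∫ x in Set.Icc a b, ‖F x‖ ^ 2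
      ≤ M ^ 2 * volume.real (Set.Icc a b) :=
        (le_abs_self _).trans (norm_setIntegral_le_of_norm_le_const (by simp) hsq)
    _ = M ^ 2 * (b - a) := by rw [Real.volume_real_Icc_of_le hab]

/-- `V` is differentiable, supported in `[a, b]`, and both `V` and `V'` are bounded by `M`. -/
structure IsC1Bump (V : ℝ → ℂ) (a b M : ℝ) : Prop where
  differentiable : Differentiable ℝ V
  norm_le : ∀ ω, ‖V ω‖ ≤ M
  norm_deriv_le : ∀ ω, ‖deriv V ω‖ ≤ M
  support_subset : Function.support V ⊆ Set.Icc a b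

namespace IsC1Bump

variable {V : ℝ → ℂ} {a b M : ℝ}

lemma bound_nonneg (hV : IsC1Bump V a b M) : 0 ≤ M := (norm_nonneg _).trans (hV.norm_le 0)

lemma eq_zero (hV : IsC1Bump V a b M) {ω : ℝ} (hω : ω ∉ Set.Icc a b) : V ω = 0 :=
  Function.notMem_support.1 fun h => hω (hV.support_subset h)

lemma support_deriv_subset (hV : IsC1Bump V a b M) :
    Function.support (deriv V) ⊆ Set.Icc a b :=
  _root_.support_deriv_subset.trans (closure_minimal hV.support_subset isClosed_Icc)

lemma continuous (hV : IsC1Bump V a b M) : Continuous V := hV.differentiable.continuous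

lemma memLp (hV : IsC1Bump V a b M) (p : ENNReal) : MemLp V p :=
  memLp_of_norm_le_of_support_subset hV.continuous.aestronglyMeasurable hV.norm_le
    hV.support_subset p

lemma memLp_deriv (hV : IsC1Bump V a b M) (p : ENNReal) : MemLp (deriv V) p :=
  memLp_of_norm_le_of_support_subset (measurable_deriv V).aestronglyMeasurable hV.norm_deriv_le
    hV.support_deriv_subset p

lemma integrable (hV : IsC1Bump V a b M) : Integrable V := memLp_one_iff_integrable.1 (hV.memLp 1)

lemma integrable_deriv (hV : IsC1Bump V a b M) : Integrable (deriv V) :=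
  memLp_one_iff_integrable.1 (hV.memLp_deriv 1)

lemma mul (hV : IsC1Bump V a b M) {h : ℝ → ℂ} {G : ℝ}
    (hd : ∀ ω ∈ Set.Icc a b, DifferentiableAt ℝ h ω) (hG : ∀ ω ∈ Set.Icc a b, ‖h ω‖ ≤ G)
    (hG' : ∀ ω ∈ Set.Icc a b, ‖deriv h ω‖ ≤ G) (hG0 : 0 ≤ G) :
    IsC1Bump (fun ω => V ω * h ω) a b (2 * M * G) := by
  have hM := hV.bound_nonneg
  have hMG : 0 ≤ M * G := mul_nonneg hM hG0
  have hderiv (ω) : HasDerivAt (fun ω => V ω * h ω) (deriv V ω * h ω + V ω * deriv h ω) ω := by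
    by_cases hω : ω ∈ Set.Icc a b
    · exact (hV.differentiable ω).hasDerivAt.mul (hd ω hω).hasDerivAt
    · rw [Function.notMem_support.1 fun h => hω (hV.support_deriv_subset h), hV.eq_zero hω,
        zero_mul, zero_mul, add_zero]
      refine (hasDerivAt_const ω (0 : ℂ)).congr_of_eventuallyEq ?_
      filter_upwards [isClosed_Icc.isOpen_compl.mem_nhds hω] with x hx
      rw [hV.eq_zero hx, zero_mul]
  refine ⟨fun ω => (hderiv ω).differentiableAt, fun ω => ?_, fun ω => ?_, fun ω hω =>
    hV.support_subset (left_ne_zero_of_mul hω)⟩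
  · by_cases hω : ω ∈ Set.Icc a b
    · rw [norm_mul]
      linarith [mul_le_mul (hV.norm_le ω) (hG ω hω) (norm_nonneg _) hM]
    · rw [hV.eq_zero hω, zero_mul, norm_zero]
      linarith
  · by_cases hω : ω ∈ Set.Icc a b
    · calc ‖deriv (fun ω => V ω * h ω) ω‖ ≤ ‖deriv V ω‖ * ‖h ω‖ + ‖V ω‖ * ‖deriv h ω‖ := by
            rw [(hderiv ω).deriv, ← norm_mul, ← norm_mul]
            exact norm_add_le _ _
        _ ≤ M * G + M * G := by
            gcongr
            exacts [hV.norm_deriv_le ω, hG ω hω, hV.norm_le ω, hG' ω hω]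
        _ = 2 * M * G := by ring
    · rw [(hderiv ω).deriv, Function.notMem_support.1 fun h => hω (hV.support_deriv_subset h),
        hV.eq_zero hω, zero_mul, zero_mul, add_zero, norm_zero]
      linarith

lemma integrable_one_add_sq_mul_norm_sq_cft (hV : IsC1Bump V a b M) :
    Integrable fun x => (1 + x ^ 2) * ‖cft V x‖ ^ 2 := by
  simp only [one_add_sq_mul_norm_sq_cft hV.integrable hV.differentiable hV.integrable_deriv]
  exact (integrable_norm_sq_cft hV.integrable (hV.memLp 2)).add
    (integrable_norm_sq_cft hV.integrable_deriv (hV.memLp_deriv 2))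

lemma integral_norm_sq_cft_le (hV : IsC1Bump V a b M) (hab : a ≤ b) :
    ∫ x, ‖cft V x‖ ^ 2 ≤ 2 * Real.pi * (M ^ 2 * (b - a)) := by
  rw [integral_norm_sq_cft hV.integrable (hV.memLp 2)]
  gcongr
  exact integral_norm_sq_le_of_support_subset hab hV.norm_le hV.support_subset

lemma integral_one_add_sq_mul_norm_sq_cft_le (hV : IsC1Bump V a b M) (hab : a ≤ b) :
    ∫ x, (1 + x ^ 2) * ‖cft V x‖ ^ 2 ≤ 4 * Real.pi * (M ^ 2 * (b - a)) := by
  simp only [one_add_sq_mul_norm_sq_cft hV.integrable hV.differentiable hV.integrable_deriv]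
  rw [integral_add (integrable_norm_sq_cft hV.integrable (hV.memLp 2))
    (integrable_norm_sq_cft hV.integrable_deriv (hV.memLp_deriv 2)),
    integral_norm_sq_cft hV.integrable_deriv (hV.memLp_deriv 2)]
  have hV' := integral_norm_sq_le_of_support_subset hab hV.norm_deriv_le hV.support_deriv_subset
  linarith [hV.integral_norm_sq_cft_le hab, mul_le_mul_of_nonneg_left hV' Real.two_pi_pos.le]

lemma integrable_cft (hV : IsC1Bump V a b M) : Integrable (cft V) :=
  (sq_integral_norm_le (continuous_cft hV.integrable).aestronglyMeasurable
    hV.integrable_one_add_sq_mul_norm_sq_cft).1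

lemma sq_integral_norm_cft_le (hV : IsC1Bump V a b M) (hab : a ≤ b) :
    (∫ x, ‖cft V x‖) ^ 2 ≤ 4 * Real.pi ^ 2 * (M ^ 2 * (b - a)) :=
  calc (∫ x, ‖cft V x‖) ^ 2 ≤ Real.pi * ∫ x, (1 + x ^ 2) * ‖cft V x‖ ^ 2 :=
        (sq_integral_norm_le (continuous_cft hV.integrable).aestronglyMeasurable
          hV.integrable_one_add_sq_mul_norm_sq_cft).2
    _ ≤ Real.pi * (4 * Real.pi * (M ^ 2 * (b - a))) := by
        gcongr
        exact hV.integral_one_add_sq_mul_norm_sq_cft_le hab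
    _ = 4 * Real.pi ^ 2 * (M ^ 2 * (b - a)) := by ring

end IsC1Bump

end Bumps

section RealSynthesis

/-- The real function `2 Re ∫ e^{iωx} V(ω) dω`, whose Fourier transform is `2π` times the Hermitian
symmetrization of `V`. -/
noncomputable def realSynthesis (V : ℝ → ℂ) (x : ℝ) : ℝ := 2 * (cft V x).re

variable {V : ℝ → ℂ} {a b M : ℝ}

lemma ofReal_realSynthesis (V : ℝ → ℂ) (x : ℝ) :
    (realSynthesis V x : ℂ) = cft V x + starRingEnd ℂ (cft V x) := by
  rw [Complex.add_conj, realSynthesis]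

lemma abs_realSynthesis_le (V : ℝ → ℂ) (x : ℝ) : |realSynthesis V x| ≤ 2 * ‖cft V x‖ := by
  rw [realSynthesis, abs_mul, abs_two]
  exact mul_le_mul_of_nonneg_left (Complex.abs_re_le_norm _) two_pos.le

lemma sq_realSynthesis_le (V : ℝ → ℂ) (x : ℝ) :
    realSynthesis V x ^ 2 ≤ 4 * ‖cft V x‖ ^ 2 := by
  calc realSynthesis V x ^ 2 = |realSynthesis V x| ^ 2 := (sq_abs _).symm
    _ ≤ (2 * ‖cft V x‖) ^ 2 := pow_le_pow_left₀ (abs_nonneg _) (abs_realSynthesis_le V x) 2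
    _ = 4 * ‖cft V x‖ ^ 2 := by ring

lemma continuous_realSynthesis (hV : Integrable V) : Continuous (realSynthesis V) :=
  continuous_const.mul (Complex.continuous_re.comp (continuous_cft hV))

lemma ft_realSynthesis (hc : Continuous V) (hV : Integrable V) (hV' : Integrable (cft V)) (ω : ℝ) :
    ft (realSynthesis V) ω = 2 * Real.pi * (V (-ω) + starRingEnd ℂ (V ω)) := by
  have hconj : Integrable fun x => starRingEnd ℂ (cft V x) :=
    Complex.conjLIE.integrable_comp_iff.2 hV'
  simp only [ft_eq_cft, ofReal_realSynthesis]
  rw [cft_add hV' hconj, cft_conj, cft_cft hc hV hV',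
    cft_cft hc hV hV', neg_neg, map_mul, map_mul, Complex.conj_ofReal, Complex.conj_ofNat]
  ring

namespace IsC1Bump

lemma integrable_realSynthesis (hV : IsC1Bump V a b M) : Integrable (realSynthesis V) :=
  hV.integrable_cft.re.const_mul 2

lemma ft_realSynthesis (hV : IsC1Bump V a b M) (ω : ℝ) :
    ft (realSynthesis V) ω = 2 * Real.pi * (V (-ω) + starRingEnd ℂ (V ω)) :=
  Deconvolution.ft_realSynthesis hV.continuous hV.integrable hV.integrable_cft ω

lemma integral_realSynthesis (hV : IsC1Bump V a b M) (ha : 0 < a) : ∫ x, realSynthesis V x = 0 := by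
  have h0 := hV.ft_realSynthesis 0
  rw [neg_zero, hV.eq_zero fun h => ha.not_ge h.1, map_zero, add_zero, mul_zero] at h0
  simp only [ft, Complex.ofReal_zero, mul_zero, zero_mul, Complex.exp_zero, one_mul] at h0
  exact Complex.ofReal_eq_zero.1 (integral_complex_ofReal.symm.trans h0)

lemma sq_integral_abs_realSynthesis_le (hV : IsC1Bump V a b M) (hab : a ≤ b) :
    (∫ x, |realSynthesis V x|) ^ 2 ≤ 16 * Real.pi ^ 2 * (M ^ 2 * (b - a)) := by
  have hle : ∫ x, |realSynthesis V x| ≤ 2 * ∫ x, ‖cft V x‖ := by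
    rw [← integral_const_mul]
    exact integral_mono hV.integrable_realSynthesis.abs (hV.integrable_cft.norm.const_mul 2)
      (abs_realSynthesis_le V)
  calc (∫ x, |realSynthesis V x|) ^ 2 ≤ (2 * ∫ x, ‖cft V x‖) ^ 2 :=
        pow_le_pow_left₀ (integral_nonneg fun x => abs_nonneg _) hle 2
    _ = 4 * (∫ x, ‖cft V x‖) ^ 2 := by ring
    _ ≤ 4 * (4 * Real.pi ^ 2 * (M ^ 2 * (b - a))) := by
        gcongr
        exact hV.sq_integral_norm_cft_le hab
    _ = _ := by ring

lemma integrable_sq_realSynthesis (hV : IsC1Bump V a b M) :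
    Integrable fun x => realSynthesis V x ^ 2 :=
  ((integrable_norm_sq_cft hV.integrable (hV.memLp 2)).const_mul 4).mono'
    ((continuous_realSynthesis hV.integrable).pow 2).aestronglyMeasurable <|
    .of_forall fun x => by
      rw [Real.norm_of_nonneg (sq_nonneg _)]
      exact sq_realSynthesis_le V x

lemma integral_sq_realSynthesis_le (hV : IsC1Bump V a b M) (hab : a ≤ b) :
    ∫ x, realSynthesis V x ^ 2 ≤ 8 * Real.pi * (M ^ 2 * (b - a)) := by
  have hle := integral_mono hV.integrable_sq_realSynthesis
    ((integrable_norm_sq_cft hV.integrable (hV.memLp 2)).const_mul 4) (sq_realSynthesis_le V)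
  rw [integral_const_mul] at hle
  linarith [hV.integral_norm_sq_cft_le hab]

lemma integrable_one_add_sq_mul_sq_realSynthesis (hV : IsC1Bump V a b M) :
    Integrable fun x => (1 + x ^ 2) * realSynthesis V x ^ 2 := by
  have hc := continuous_realSynthesis hV.integrable
  refine (hV.integrable_one_add_sq_mul_norm_sq_cft.const_mul 4).mono'
    (by fun_prop) (.of_forall fun x => ?_)
  rw [Real.norm_of_nonneg (by positivity)]
  nlinarith [sq_realSynthesis_le V x, sq_nonneg x]

lemma integral_one_add_sq_mul_sq_realSynthesis_le (hV : IsC1Bump V a b M) (hab : a ≤ b) :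
    ∫ x, (1 + x ^ 2) * realSynthesis V x ^ 2 ≤ 16 * Real.pi * (M ^ 2 * (b - a)) := by
  have hle := integral_mono hV.integrable_one_add_sq_mul_sq_realSynthesis
    (hV.integrable_one_add_sq_mul_norm_sq_cft.const_mul 4) fun x => by
      nlinarith [sq_realSynthesis_le V x, sq_nonneg x]
  rw [integral_const_mul] at hle
  linarith [hV.integral_one_add_sq_mul_norm_sq_cft_le hab]

end IsC1Bump

end RealSynthesis

section Convolution

variable {r w : ℝ → ℝ} {V : ℝ → ℂ}

lemma convolution_apply (r w : ℝ → ℝ) (y : ℝ) : (r ⋆ w) y = ∫ θ, r (y - θ) * w θ :=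
  convolution_lsmul_swap

lemma convolution_nonneg (hr : ∀ x, 0 ≤ r x) (hw : ∀ x, 0 ≤ w x) (y : ℝ) : 0 ≤ (r ⋆ w) y := by
  rw [convolution_apply]
  exact integral_nonneg fun θ => mul_nonneg (hr _) (hw _)

lemma ae_integrable_comp_sub_left_mul (hr : Integrable r) (hw : Integrable w) :
    ∀ᵐ y, Integrable fun θ => r (y - θ) * w θ := by
  filter_upwards [hr.ae_convolution_exists (ContinuousLinearMap.lsmul ℝ ℝ) hw] with y hy
  simpa only [ContinuousLinearMap.lsmul_apply, smul_eq_mul, sub_sub_cancel]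
    using hy.integrable.comp_sub_left y

lemma convolution_sub_convolution_ae {w₀ w₁ : ℝ → ℝ} (hr : Integrable r) (hw₀ : Integrable w₀)
    (hw₁ : Integrable w₁) : r ⋆ w₁ - r ⋆ w₀ =ᵐ[volume] r ⋆ (w₁ - w₀) := by
  filter_upwards [ae_integrable_comp_sub_left_mul hr hw₀, ae_integrable_comp_sub_left_mul hr hw₁]
    with x h₀ h₁
  simp only [Pi.sub_apply, convolution_apply, mul_sub]
  exact (integral_sub h₁ h₀).symm

lemma ft_convolution (hr : Integrable r) (hw : Integrable w) (ω : ℝ) :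
    ft (r ⋆ w) ω = ft r ω * ft w ω := by
  have hcomplex : (fun y => ((r ⋆ w) y : ℂ)) =
      (fun x => (r x : ℂ)) ⋆[ContinuousLinearMap.mul ℂ ℂ] fun x => (w x : ℂ) := by
    ext y
    rw [convolution_def, convolution_def, ← integral_complex_ofReal]
    simp only [ContinuousLinearMap.lsmul_apply, smul_eq_mul, ContinuousLinearMap.mul_apply',
      Complex.ofReal_mul]
  rw [ft_eq_cft, ft_eq_cft, ft_eq_cft, hcomplex, cft_eq_fourier, cft_eq_fourier, cft_eq_fourier]
  exact Real.fourier_mul_convolution_eq hr.ofReal hw.ofReal _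

lemma ft_conj (t : ℝ → ℝ) (ω : ℝ) : (starRingEnd ℂ) (ft t ω) = ft t (-ω) := by
  have h := cft_conj (fun x => (t x : ℂ)) (-ω)
  simp only [Complex.conj_ofReal, neg_neg] at h
  exact h.symm

lemma norm_ft_neg (t : ℝ → ℝ) (ω : ℝ) : ‖ft t (-ω)‖ = ‖ft t ω‖ := by
  rw [← ft_conj, RCLike.norm_conj]

lemma continuous_ft (hr : Integrable r) : Continuous (ft r) := continuous_cft hr.ofReal

lemma integral_mul_cft_comp_sub (hr : Integrable r) (hV : Integrable V) (y : ℝ) :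
    ∫ θ, (r (y - θ) : ℂ) * cft V θ = cft (fun ω => V ω * ft r (-ω)) y := by
  have hint : Integrable (Function.uncurry fun θ ω : ℝ =>
      Complex.exp (Complex.I * θ * ω) * ((r (y - θ) : ℂ) * V ω)) :=
    ((hr.comp_sub_left y).ofReal.mul_prod hV).bdd_mul (c := 1)
      (by fun_prop : Continuous fun p : ℝ × ℝ =>
        Complex.exp (Complex.I * p.1 * p.2)).aestronglyMeasurable
      (.of_forall fun p => (norm_exp_I_mul_mul _ _).le)
  calc ∫ θ, (r (y - θ) : ℂ) * cft V θ
      = ∫ θ : ℝ, ∫ ω : ℝ, Complex.exp (Complex.I * θ * ω) * ((r (y - θ) : ℂ) * V ω) := by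
        simp only [cft, ← integral_const_mul, mul_left_comm]
    _ = ∫ ω : ℝ, ∫ θ : ℝ, Complex.exp (Complex.I * θ * ω) * ((r (y - θ) : ℂ) * V ω) :=
        integral_integral_swap hint
    _ = cft (fun ω => V ω * ft r (-ω)) y := by
        refine integral_congr_ae (.of_forall fun ω => ?_)
        simp only
        rw [← integral_sub_left_eq_self _ volume y, ft, ← integral_const_mul, ← integral_const_mul]
        refine integral_congr_ae (.of_forall fun ξ => ?_)
        have hexp : Complex.exp (Complex.I * ((y - ξ : ℝ) : ℂ) * ω) =
            Complex.exp (Complex.I * y * ω) * Complex.exp (Complex.I * ((-ω : ℝ) : ℂ) * ξ) := by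
          rw [← Complex.exp_add]
          push_cast
          ring_nf
        simp only [hexp, sub_sub_cancel]
        ring

lemma convolution_realSynthesis (hr : Integrable r) (hV : Integrable V) :
    r ⋆ realSynthesis V = realSynthesis fun ω => V ω * ft r (-ω) := by
  ext y
  have hint : Integrable fun θ => (r (y - θ) : ℂ) * cft V θ :=
    (hr.comp_sub_left y).ofReal.mul_bdd (continuous_cft hV).aestronglyMeasurable
      (.of_forall (norm_cft_le V))
  rw [convolution_apply, realSynthesis, ← integral_mul_cft_comp_sub hr hV,
    ← RCLike.re_eq_complex_re, ← integral_re hint, ← integral_const_mul]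
  refine integral_congr_ae (.of_forall fun θ => ?_)
  simp only [realSynthesis, RCLike.re_eq_complex_re, Complex.re_ofReal_mul]
  ring

end Convolution

section Density

/-- `f` is a probability density with respect to the reference measure `volume`. -/
structure IsProbDensity {X : Type*} [MeasureSpace X] (f : X → ℝ) : Prop where
  nonneg : ∀ x, 0 ≤ f x
  integrable : Integrable f
  integral_eq_one : ∫ x, f x = 1

namespace IsProbDensity

variable {r f : ℝ → ℝ}

lemma convolution (hr : IsProbDensity r) (hf : IsProbDensity f) : IsProbDensity (r ⋆ f) where
  nonneg := convolution_nonneg hr.nonneg hf.nonneg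
  integrable := hr.integrable.integrable_convolution _ hf.integrable
  integral_eq_one := by
    rw [integral_convolution _ hr.integrable hf.integrable, hr.integral_eq_one,
      hf.integral_eq_one, ContinuousLinearMap.lsmul_apply, one_smul]

lemma norm_ft_le_one (hf : IsProbDensity f) (ω : ℝ) : ‖ft f ω‖ ≤ 1 := by
  refine (norm_cft_le _ ω).trans_eq ?_
  simp only [Complex.norm_real, Real.norm_of_nonneg (hf.nonneg _), hf.integral_eq_one]

lemma integral_mul_pos (hr : IsProbDensity r) {h : ℝ → ℝ} (hpos : ∀ x, 0 < h x)
    (hint : Integrable fun x => r x * h x) : 0 < ∫ x, r x * h x := by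
  have hnonneg : 0 ≤ fun x => r x * h x := fun x => mul_nonneg (hr.nonneg x) (hpos x).le
  refine (integral_nonneg hnonneg).lt_of_ne fun hzero => ?_
  have hr0 : r =ᵐ[volume] 0 := by
    filter_upwards [(integral_eq_zero_iff_of_nonneg hnonneg hint).1 hzero.symm] with x hx
    exact (mul_eq_zero.1 hx).resolve_right (hpos x).ne'
  have hone := hr.integral_eq_one
  rw [integral_congr_ae hr0] at hone
  simp at hone

lemma exists_inv_one_add_sq_le_convolution (hr : IsProbDensity r) :
    ∃ c > 0, ∀ k, 0 ≤ k → ∀ w, Integrable w → (∀ᵐ x, k * (1 + x ^ 2)⁻¹ ≤ w x) →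
      ∀ᵐ y, c * k * (1 + y ^ 2)⁻¹ ≤ (r ⋆ w) y := by
  have hle_one : ∀ᵐ ξ : ℝ, ‖(1 + ξ ^ 2)⁻¹‖ ≤ 1 := .of_forall fun ξ => by
    rw [Real.norm_of_nonneg (by positivity)]
    exact inv_le_one_of_one_le₀ (by nlinarith [sq_nonneg ξ])
  have hint : Integrable fun ξ => r ξ * (1 + ξ ^ 2)⁻¹ :=
    hr.integrable.mul_bdd integrable_inv_one_add_sq.aestronglyMeasurable hle_one
  refine ⟨(∫ ξ, r ξ * (1 + ξ ^ 2)⁻¹) / 2,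
    half_pos (hr.integral_mul_pos (fun x => by positivity) hint), fun k hk w hw hle => ?_⟩
  filter_upwards [ae_integrable_comp_sub_left_mul hr.integrable hw] with y hy
  have hy' : Integrable fun ξ => r ξ * w (y - ξ) := by
    simpa only [sub_sub_cancel] using hy.comp_sub_left y
  -- `1 + (y - ξ) ^ 2 ≤ 2 * (1 + y ^ 2) * (1 + ξ ^ 2)`
  have hkernel (ξ : ℝ) : (1 + ξ ^ 2)⁻¹ * (k * (1 + y ^ 2)⁻¹ / 2) ≤ k * (1 + (y - ξ) ^ 2)⁻¹ := by
    rw [show (1 + ξ ^ 2)⁻¹ * (k * (1 + y ^ 2)⁻¹ / 2) =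
      k * (2 * (1 + ξ ^ 2) * (1 + y ^ 2))⁻¹ by field_simp]
    gcongr
    nlinarith [sq_nonneg (y + ξ), sq_nonneg (y * ξ)]
  calc (∫ ξ, r ξ * (1 + ξ ^ 2)⁻¹) / 2 * k * (1 + y ^ 2)⁻¹
      = ∫ ξ, r ξ * (1 + ξ ^ 2)⁻¹ * (k * (1 + y ^ 2)⁻¹ / 2) := by
        rw [integral_mul_const]
        ring
    _ ≤ ∫ ξ, r ξ * w (y - ξ) := by
        refine integral_mono_ae (hint.mul_const _) hy' ?_
        filter_upwards [(quasiMeasurePreserving_sub_left_of_right_invariant volume y).ae hle]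
          with ξ hξ
        rw [mul_assoc]
        exact mul_le_mul_of_nonneg_left ((hkernel ξ).trans hξ) (hr.nonneg ξ)
    _ = (r ⋆ w) y := by
        rw [convolution_apply, ← integral_sub_left_eq_self (fun θ => r (y - θ) * w θ) volume y]
        simp only [sub_sub_cancel]

end IsProbDensity

/-- The centred Gaussian density of standard deviation `1 / m`, an approximate identity as
`m → ∞`. -/
noncomputable def gaussianMollifier (m : ℝ) : ℝ → ℝ :=
  ProbabilityTheory.gaussianPDFReal 0 ((m ^ 2)⁻¹).toNNReal

lemma isProbDensity_gaussianMollifier {m : ℝ} (hm : 0 < m) :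
    IsProbDensity (gaussianMollifier m) where
  nonneg := ProbabilityTheory.gaussianPDFReal_nonneg _ _
  integrable := ProbabilityTheory.integrable_gaussianPDFReal _ _
  integral_eq_one :=
    ProbabilityTheory.integral_gaussianPDFReal_eq_one _ (Real.toNNReal_pos.2 (by positivity)).ne'

lemma ft_gaussianMollifier {m : ℝ} (hm : 0 < m) (ω : ℝ) :
    ft (gaussianMollifier m) ω = (Real.exp (-(ω / m) ^ 2 / 2) : ℝ) := by
  have hchar := ProbabilityTheory.charFun_gaussianReal (μ := 0) (v := ((m ^ 2)⁻¹).toNNReal) ω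
  rw [charFun_apply_real, ProbabilityTheory.integral_gaussianReal_eq_integral_smul
    (Real.toNNReal_pos.2 (by positivity)).ne'] at hchar
  rw [Real.coe_toNNReal _ (by positivity)] at hchar
  calc ft (gaussianMollifier m) ω
      = ∫ x, ProbabilityTheory.gaussianPDFReal 0 ((m ^ 2)⁻¹).toNNReal x •
          Complex.exp (ω * x * Complex.I) := by
        refine integral_congr_ae (.of_forall fun x => ?_)
        simp only [Complex.real_smul, gaussianMollifier]
        ring_nf
    _ = (Real.exp (-(ω / m) ^ 2 / 2) : ℝ) := by
        rw [hchar]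
        push_cast
        ring_nf

lemma isProbDensity_cauchy : IsProbDensity (ProbabilityTheory.cauchyPDFReal 0 1) where
  nonneg x := (ProbabilityTheory.cauchyPDF_pos 0 one_ne_zero x).le
  integrable := ProbabilityTheory.integrable_cauchyPDFReal 0
  integral_eq_one := ProbabilityTheory.integral_cauchyPDFReal_eq_one 0 one_ne_zero

lemma cauchyPDFReal_zero_one (x : ℝ) :
    ProbabilityTheory.cauchyPDFReal 0 1 x = Real.pi⁻¹ * (1 + x ^ 2)⁻¹ := by
  simp [ProbabilityTheory.cauchyPDFReal_def, add_comm]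

end Density

section LeCam

variable {X : Type*} [MeasureSpace X] {p₀ p₁ : X → ℝ}

/-- The Hellinger affinity `∫ √(p₀ p₁)` of two densities. -/
noncomputable def affinity (p₀ p₁ : X → ℝ) : ℝ := ∫ x, √(p₀ x) * √(p₁ x)

namespace IsProbDensity

lemma integrable_sqrt_mul_sqrt (h₀ : IsProbDensity p₀) (h₁ : IsProbDensity p₁) :
    Integrable fun x => √(p₀ x) * √(p₁ x) := by
  refine (h₀.integrable.add h₁.integrable).mono'
    ((Real.continuous_sqrt.comp_aestronglyMeasurable h₀.integrable.1).mul
      (Real.continuous_sqrt.comp_aestronglyMeasurable h₁.integrable.1)) (.of_forall fun x => ?_)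
  rw [Real.norm_of_nonneg (by positivity), Pi.add_apply]
  nlinarith [sq_nonneg (√(p₀ x) - √(p₁ x)), Real.sq_sqrt (h₀.nonneg x),
    Real.sq_sqrt (h₁.nonneg x)]

lemma integrable_min (h₀ : IsProbDensity p₀) (h₁ : IsProbDensity p₁) :
    Integrable fun x => min (p₀ x) (p₁ x) :=
  h₀.integrable.inf h₁.integrable

lemma sq_affinity_le (h₀ : IsProbDensity p₀) (h₁ : IsProbDensity p₁) :
    affinity p₀ p₁ ^ 2 ≤ 2 * ∫ x, min (p₀ x) (p₁ x) := by
  set A := affinity p₀ p₁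
  -- AM-GM with weight `A / 2`, applied to `√p₀ √p₁ = √(min p₀ p₁) √(max p₀ p₁)`.
  have hpoint (x : X) : A * (√(p₀ x) * √(p₁ x)) ≤
      min (p₀ x) (p₁ x) + A ^ 2 / 4 * (p₀ x + p₁ x) := by
    have hsq₀ := Real.sq_sqrt (h₀.nonneg x)
    have hsq₁ := Real.sq_sqrt (h₁.nonneg x)
    rcases le_total (p₀ x) (p₁ x) with h | h
    · rw [min_eq_left h]
      nlinarith [sq_nonneg (√(p₀ x) - A / 2 * √(p₁ x)), mul_nonneg (sq_nonneg A) (h₀.nonneg x)]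
    · rw [min_eq_right h]
      nlinarith [sq_nonneg (√(p₁ x) - A / 2 * √(p₀ x)), mul_nonneg (sq_nonneg A) (h₁.nonneg x)]
  have hsum : Integrable fun x => A ^ 2 / 4 * (p₀ x + p₁ x) :=
    (h₀.integrable.add h₁.integrable).const_mul _
  have hint := integral_mono ((h₀.integrable_sqrt_mul_sqrt h₁).const_mul A)
    ((h₀.integrable_min h₁).add hsum) hpoint
  simp only [Pi.add_apply] at hint
  rw [integral_const_mul, integral_add (h₀.integrable_min h₁) hsum, integral_const_mul,
    integral_add h₀.integrable h₁.integrable, h₀.integral_eq_one, h₁.integral_eq_one] at hint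
  change A * A ≤ _ at hint
  linarith

lemma one_sub_half_chiSq_le_affinity (h₀ : IsProbDensity p₀) (h₁ : IsProbDensity p₁)
    (hpos : ∀ᵐ x, 0 < p₀ x) (hχ : Integrable fun x => (p₁ x - p₀ x) ^ 2 / p₀ x) :
    1 - (∫ x, (p₁ x - p₀ x) ^ 2 / p₀ x) / 2 ≤ affinity p₀ p₁ := by
  have hsum : Integrable fun x => (p₀ x + p₁ x) / 2 :=
    (h₀.integrable.add h₁.integrable).div_const 2
  have hmean : ∫ x, (p₀ x + p₁ x) / 2 = 1 := by
    rw [integral_div, integral_add h₀.integrable h₁.integrable, h₀.integral_eq_one,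
      h₁.integral_eq_one]
    norm_num
  calc 1 - (∫ x, (p₁ x - p₀ x) ^ 2 / p₀ x) / 2
      = ∫ x, ((p₀ x + p₁ x) / 2 - (p₁ x - p₀ x) ^ 2 / p₀ x / 2) := by
        rw [integral_sub hsum (hχ.div_const 2), hmean, integral_div]
    _ ≤ affinity p₀ p₁ := by
        refine integral_mono_ae (hsum.sub (hχ.div_const 2)) (h₀.integrable_sqrt_mul_sqrt h₁) ?_
        filter_upwards [hpos] with x hx
        -- `(√p₁ - √p₀)² ≤ (p₁ - p₀)² / p₀` since `√p₁ + √p₀ ≥ √p₀`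
        have hsq₀ := Real.sq_sqrt hx.le
        have hsq₁ := Real.sq_sqrt (h₁.nonneg x)
        have hfactor : (√(p₁ x) - √(p₀ x)) ^ 2 * p₀ x ≤ (p₁ x - p₀ x) ^ 2 := by
          have hle : p₀ x ≤ (√(p₁ x) + √(p₀ x)) ^ 2 := by
            nlinarith [Real.sqrt_nonneg (p₁ x), Real.sqrt_nonneg (p₀ x)]
          calc (√(p₁ x) - √(p₀ x)) ^ 2 * p₀ x
              ≤ (√(p₁ x) - √(p₀ x)) ^ 2 * (√(p₁ x) + √(p₀ x)) ^ 2 := by gcongr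
            _ = (√(p₁ x) ^ 2 - √(p₀ x) ^ 2) ^ 2 := by ring
            _ = (p₁ x - p₀ x) ^ 2 := by rw [hsq₀, hsq₁]
        have := (le_div_iff₀ hx).2 hfactor
        nlinarith

lemma pi {ι : Type*} [Fintype ι] [SigmaFinite (volume : Measure X)] (h : IsProbDensity p₀) :
    IsProbDensity fun y : ι → X => ∏ i, p₀ (y i) where
  nonneg y := prod_nonneg fun i _ => h.nonneg _
  integrable := .fintype_prod fun _ => h.integrable
  integral_eq_one := by
    rw [integral_fintype_prod_volume_eq_pow, h.integral_eq_one, one_pow]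

lemma affinity_pi {ι : Type*} [Fintype ι] [SigmaFinite (volume : Measure X)]
    (h₀ : IsProbDensity p₀) (h₁ : IsProbDensity p₁) :
    affinity (fun y : ι → X => ∏ i, p₀ (y i)) (fun y => ∏ i, p₁ (y i)) =
      affinity p₀ p₁ ^ Fintype.card ι := by
  rw [affinity, affinity, ← integral_fintype_prod_volume_eq_pow]
  refine integral_congr_ae (.of_forall fun y => ?_)
  simp only [Real.sqrt_prod _ fun i _ => h₀.nonneg (y i),
    Real.sqrt_prod _ fun i _ => h₁.nonneg (y i), prod_mul_distrib]

variable {E : Type*} [NormedAddCommGroup E]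

lemma two_point_risk (h₀ : IsProbDensity p₀) (h₁ : IsProbDensity p₁) {T : X → E}
    (hT : AEStronglyMeasurable T) (a₀ a₁ : E) :
    ENNReal.ofReal (‖a₁ - a₀‖ ^ 2 / 4 * affinity p₀ p₁ ^ 2) ≤
      (∫⁻ x, ENNReal.ofReal (‖T x - a₀‖ ^ 2 * p₀ x)) +
        ∫⁻ x, ENNReal.ofReal (‖T x - a₁‖ ^ 2 * p₁ x) := by
  have hpoint (x : X) : ‖a₁ - a₀‖ ^ 2 / 2 * min (p₀ x) (p₁ x) ≤
      ‖T x - a₀‖ ^ 2 * p₀ x + ‖T x - a₁‖ ^ 2 * p₁ x := by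
    have htri : ‖a₁ - a₀‖ ≤ ‖T x - a₀‖ + ‖T x - a₁‖ := by
      rw [show a₁ - a₀ = T x - a₀ - (T x - a₁) by abel]
      exact norm_sub_le _ _
    have hsq : ‖a₁ - a₀‖ ^ 2 / 2 ≤ ‖T x - a₀‖ ^ 2 + ‖T x - a₁‖ ^ 2 := by
      nlinarith [norm_nonneg (a₁ - a₀), sq_nonneg (‖T x - a₀‖ - ‖T x - a₁‖)]
    calc ‖a₁ - a₀‖ ^ 2 / 2 * min (p₀ x) (p₁ x)
        ≤ (‖T x - a₀‖ ^ 2 + ‖T x - a₁‖ ^ 2) * min (p₀ x) (p₁ x) :=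
          mul_le_mul_of_nonneg_right hsq (le_min (h₀.nonneg x) (h₁.nonneg x))
      _ ≤ ‖T x - a₀‖ ^ 2 * p₀ x + ‖T x - a₁‖ ^ 2 * p₁ x := by
          rw [add_mul]
          gcongr
          exacts [min_le_left _ _, min_le_right _ _]
  have hmeas : AEMeasurable fun x => ENNReal.ofReal (‖T x - a₀‖ ^ 2 * p₀ x) :=
    (((hT.sub aestronglyMeasurable_const).norm.pow 2).mul
      h₀.integrable.1).aemeasurable.ennreal_ofReal
  calc ENNReal.ofReal (‖a₁ - a₀‖ ^ 2 / 4 * affinity p₀ p₁ ^ 2)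
      ≤ ENNReal.ofReal (∫ x, ‖a₁ - a₀‖ ^ 2 / 2 * min (p₀ x) (p₁ x)) := by
        rw [integral_const_mul]
        refine ENNReal.ofReal_le_ofReal ?_
        nlinarith [h₀.sq_affinity_le h₁, sq_nonneg ‖a₁ - a₀‖]
    _ = ∫⁻ x, ENNReal.ofReal (‖a₁ - a₀‖ ^ 2 / 2 * min (p₀ x) (p₁ x)) :=
        ofReal_integral_eq_lintegral_ofReal ((h₀.integrable_min h₁).const_mul _) <|
          .of_forall fun x => mul_nonneg (by positivity) (le_min (h₀.nonneg x) (h₁.nonneg x))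
    _ ≤ ∫⁻ x, (ENNReal.ofReal (‖T x - a₀‖ ^ 2 * p₀ x) +
          ENNReal.ofReal (‖T x - a₁‖ ^ 2 * p₁ x)) := by
        refine lintegral_mono fun x => ?_
        rw [← ENNReal.ofReal_add (mul_nonneg (by positivity) (h₀.nonneg x))
          (mul_nonneg (by positivity) (h₁.nonneg x))]
        exact ENNReal.ofReal_le_ofReal (hpoint x)
    _ = _ := lintegral_add_left' hmeas _

lemma two_point_risk_pi [SigmaFinite (volume : Measure X)] {n : ℕ} (h₀ : IsProbDensity p₀)
    (h₁ : IsProbDensity p₁) (hpos : ∀ᵐ x, 0 < p₀ x)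
    (hχ : Integrable fun x => (p₁ x - p₀ x) ^ 2 / p₀ x)
    (hχn : n * ∫ x, (p₁ x - p₀ x) ^ 2 / p₀ x ≤ 1) {T : (Fin n → X) → E}
    (hT : AEStronglyMeasurable T) (a₀ a₁ : E) :
    ENNReal.ofReal (‖a₁ - a₀‖ ^ 2 / 32) ≤
        ∫⁻ y, ENNReal.ofReal (‖T y - a₀‖ ^ 2 * ∏ i, p₀ (y i)) ∨
      ENNReal.ofReal (‖a₁ - a₀‖ ^ 2 / 32) ≤
        ∫⁻ y, ENNReal.ofReal (‖T y - a₁‖ ^ 2 * ∏ i, p₁ (y i)) := by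
  have haff : 1 / 2 ≤ affinity p₀ p₁ ^ n := by
    rcases n.eq_zero_or_pos with rfl | hn
    · norm_num
    have hone : (1 : ℝ) ≤ n := by exact_mod_cast hn
    have hχ_nonneg : 0 ≤ᵐ[volume] fun x => (p₁ x - p₀ x) ^ 2 / p₀ x :=
      .of_forall fun x => div_nonneg (sq_nonneg _) (h₀.nonneg x)
    have hχ_le := integral_nonneg_of_ae hχ_nonneg
    have hle := h₀.one_sub_half_chiSq_le_affinity h₁ hpos hχ
    set χ := ∫ x, (p₁ x - p₀ x) ^ 2 / p₀ x
    have hχ_one : χ ≤ 1 := by nlinarith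
    calc (1 / 2 : ℝ) ≤ 1 + n * (-(χ / 2)) := by linarith
      _ ≤ (1 + -(χ / 2)) ^ n := one_add_mul_le_pow (by linarith) n
      _ ≤ affinity p₀ p₁ ^ n := pow_le_pow_left₀ (by linarith) (by linarith) n
  have hsum := (h₀.pi (ι := Fin n)).two_point_risk h₁.pi hT a₀ a₁
  rw [h₀.affinity_pi h₁, Fintype.card_fin] at hsum
  by_contra! hlt
  refine hsum.not_gt ((ENNReal.add_lt_add hlt.1 hlt.2).trans_le ?_)
  rw [← ENNReal.ofReal_add (by positivity) (by positivity)]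
  have haff_sq : 1 / 4 ≤ (affinity p₀ p₁ ^ n) ^ 2 := by nlinarith
  refine ENNReal.ofReal_le_ofReal ?_
  nlinarith [sq_nonneg ‖a₁ - a₀‖]

end IsProbDensity

end LeCam

section Sobolev

variable {s B m : ℝ} {p r w W : ℝ → ℝ}

/-- The Sobolev ball `Ω_s(B)`. Integrability is required separately because the integral of a
non-integrable function is `0`. -/
def SobolevBall (s B : ℝ) : Set (ℝ → ℝ) :=
  {t | Integrable (fun ω => ‖ft t ω‖ ^ 2 * (ω ^ 2 + 1) ^ s) ∧
    ∫ ω, ‖ft t ω‖ ^ 2 * (ω ^ 2 + 1) ^ s ≤ B ^ 2}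

lemma mem_sobolevBall_of_le (hr : Integrable r) {F : ℝ → ℝ} (hF : Integrable F)
    (hle : ∀ ω, ‖ft r ω‖ ^ 2 * (ω ^ 2 + 1) ^ s ≤ F ω) (hB : ∫ ω, F ω ≤ B ^ 2) :
    r ∈ SobolevBall s B := by
  have hweight : Continuous fun ω : ℝ => (ω ^ 2 + 1) ^ s :=
    (by fun_prop : Continuous fun ω : ℝ => ω ^ 2 + 1).rpow_const fun ω => .inl (by positivity)
  have hint : Integrable fun ω => ‖ft r ω‖ ^ 2 * (ω ^ 2 + 1) ^ s := by
    refine hF.mono' (((continuous_ft hr).norm.pow 2).mul hweight).aestronglyMeasurable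
      (.of_forall fun ω => ?_)
    rw [Real.norm_of_nonneg (by positivity)]
    exact hle ω
  exact ⟨hint, (integral_mono hint hF hle).trans hB⟩

lemma ft_const_mul_add (hp : Integrable p) (hr : Integrable r) (c ω : ℝ) :
    ft (fun x => c * p x + r x) ω = c * ft p ω + ft r ω := by
  have hcp : Integrable fun x => (c : ℂ) * (p x : ℂ) := hp.ofReal.const_mul _
  simp only [ft_eq_cft, Complex.ofReal_add, Complex.ofReal_mul]
  rw [← cft_const_mul]
  exact cft_add hcp hr.ofReal ω

lemma const_mul_add_mem_sobolevBall (hp : Integrable p) (hr : Integrable r) {c : ℝ}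
    (hc : |c| ≤ 1) (hpB : p ∈ SobolevBall s (B / 2)) (hrB : r ∈ SobolevBall s (B / 2)) :
    (fun x => c * p x + r x) ∈ SobolevBall s B := by
  refine mem_sobolevBall_of_le ((hp.const_mul c).add hr)
    ((hpB.1.const_mul 2).add (hrB.1.const_mul 2)) (fun ω => ?_) ?_
  · have hnorm : ‖ft (fun x => c * p x + r x) ω‖ ≤ ‖ft p ω‖ + ‖ft r ω‖ := by
      rw [ft_const_mul_add hp hr]
      refine (norm_add_le _ _).trans (add_le_add_left ?_ _)
      rw [norm_mul, Complex.norm_real, Real.norm_eq_abs]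
      exact mul_le_of_le_one_left (norm_nonneg _) hc
    calc ‖ft (fun x => c * p x + r x) ω‖ ^ 2 * (ω ^ 2 + 1) ^ s
        ≤ (2 * ‖ft p ω‖ ^ 2 + 2 * ‖ft r ω‖ ^ 2) * (ω ^ 2 + 1) ^ s := by
          gcongr
          nlinarith [norm_nonneg (ft (fun x => c * p x + r x) ω),
            sq_nonneg (‖ft p ω‖ - ‖ft r ω‖)]
      _ = _ := by
          simp only [Pi.add_apply]
          ring
  · simp only [Pi.add_apply]
    rw [integral_add (hpB.1.const_mul 2) (hrB.1.const_mul 2), integral_const_mul,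
      integral_const_mul]
    linarith [hpB.2, hrB.2]

lemma exists_add_one_rpow_le_mul_exp (s : ℝ) :
    ∃ C > 0, ∀ x : ℝ, 0 ≤ x → (x + 1) ^ s ≤ C * Real.exp (x / 2) := by
  refine ⟨2 ^ ⌈s⌉₊ * (⌈s⌉₊).factorial * Real.exp (1 / 2), by positivity, fun x hx => ?_⟩
  have hpow := Real.pow_div_factorial_le_exp (x := (x + 1) / 2) (by linarith) ⌈s⌉₊
  rw [div_le_iff₀ (by positivity), div_pow, div_le_iff₀ (by positivity)] at hpow
  calc (x + 1) ^ s ≤ (x + 1) ^ ⌈s⌉₊ := by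
        rw [← Real.rpow_natCast]
        exact Real.rpow_le_rpow_of_exponent_le (by linarith) (Nat.le_ceil s)
    _ ≤ Real.exp ((x + 1) / 2) * (⌈s⌉₊).factorial * 2 ^ ⌈s⌉₊ := hpow
    _ = 2 ^ ⌈s⌉₊ * (⌈s⌉₊).factorial * Real.exp (1 / 2) * Real.exp (x / 2) := by
        rw [add_div, Real.exp_add]
        ring

lemma exists_gaussian_mul_sobolevWeight_le (hs : 0 ≤ s) :
    ∃ C > 0, ∀ m > 0, ∀ ω : ℝ, Real.exp (-(ω / m) ^ 2 / 2) ^ 2 * (ω ^ 2 + 1) ^ s ≤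
      C * max 1 m ^ (2 * s) * Real.exp (-(ω / m) ^ 2 / 2) := by
  obtain ⟨C, hC, hexp⟩ := exists_add_one_rpow_le_mul_exp s
  refine ⟨C, hC, fun m hm ω => ?_⟩
  have hscale : (ω ^ 2 + 1) ^ s ≤ max 1 m ^ (2 * s) * ((ω / m) ^ 2 + 1) ^ s := by
    have hone : 1 ≤ max 1 m := le_max_left _ _
    rw [Real.rpow_mul (by positivity), ← Real.mul_rpow (by positivity) (by positivity)]
    refine Real.rpow_le_rpow (by positivity) ?_ hs
    have hω : ω ^ 2 ≤ max 1 m ^ 2 * (ω / m) ^ 2 := by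
      calc ω ^ 2 = m ^ 2 * (ω / m) ^ 2 := by field_simp
        _ ≤ max 1 m ^ 2 * (ω / m) ^ 2 := by
            gcongr
            exact le_max_right _ _
    rw [Real.rpow_two]
    nlinarith
  calc Real.exp (-(ω / m) ^ 2 / 2) ^ 2 * (ω ^ 2 + 1) ^ s
      ≤ Real.exp (-(ω / m) ^ 2 / 2) ^ 2 *
          (max 1 m ^ (2 * s) * (C * Real.exp ((ω / m) ^ 2 / 2))) := by
        gcongr
        refine hscale.trans ?_
        gcongr
        exact hexp _ (sq_nonneg _)
    _ = C * max 1 m ^ (2 * s) * Real.exp (-(ω / m) ^ 2 / 2) *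
          Real.exp (-(ω / m) ^ 2 / 2 + (ω / m) ^ 2 / 2) := by
        rw [Real.exp_add]
        ring
    _ = C * max 1 m ^ (2 * s) * Real.exp (-(ω / m) ^ 2 / 2) := by
        rw [neg_div, neg_add_cancel, Real.exp_zero, mul_one]

lemma integrable_exp_neg_div_sq (hm : 0 < m) :
    Integrable fun ω : ℝ => Real.exp (-(ω / m) ^ 2 / 2) := by
  refine (integrable_exp_neg_mul_sq (b := (m⁻¹) ^ 2 / 2) (by positivity)).congr
    (.of_forall fun ω => ?_)
  ring_nf

lemma integral_exp_neg_div_sq (hm : 0 < m) :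
    ∫ ω : ℝ, Real.exp (-(ω / m) ^ 2 / 2) = m * √(2 * Real.pi) := by
  calc ∫ ω : ℝ, Real.exp (-(ω / m) ^ 2 / 2)
      = m * ∫ x : ℝ, Real.exp (-(1 / 2) * x ^ 2) := by
        rw [Measure.integral_comp_div (fun x => Real.exp (-x ^ 2 / 2)), abs_of_pos hm, smul_eq_mul]
        ring_nf
    _ = m * √(2 * Real.pi) := by
        rw [integral_gaussian]
        ring_nf

lemma norm_ft_gaussianMollifier_convolution (hm : 0 < m) (hw : Integrable w) (ω : ℝ) :
    ‖ft (gaussianMollifier m ⋆ w) ω‖ = Real.exp (-(ω / m) ^ 2 / 2) * ‖ft w ω‖ := by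
  rw [ft_convolution (isProbDensity_gaussianMollifier hm).integrable hw, norm_mul,
    ft_gaussianMollifier hm, Complex.norm_real, Real.norm_of_nonneg (Real.exp_pos _).le]

lemma integrable_gaussianMollifier_convolution (hm : 0 < m) (hw : Integrable w) :
    Integrable (gaussianMollifier m ⋆ w) :=
  (isProbDensity_gaussianMollifier hm).integrable.integrable_convolution _ hw

lemma integrable_ft_gaussianMollifier_convolution (hm : 0 < m) (hw : Integrable w) :
    Integrable (ft (gaussianMollifier m ⋆ w)) := by
  refine ((integrable_exp_neg_div_sq hm).mul_const (∫ x, ‖(w x : ℂ)‖)).mono'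
    (continuous_ft (integrable_gaussianMollifier_convolution hm hw)).aestronglyMeasurable
    (.of_forall fun ω => ?_)
  rw [norm_ft_gaussianMollifier_convolution hm hw]
  exact mul_le_mul_of_nonneg_left (norm_cft_le _ ω) (Real.exp_pos _).le

lemma exists_gaussianMollifier_convolution_mem_sobolevBall (hs : 0 ≤ s) (hB : 0 < B) :
    ∃ m > 0, ∀ r, IsProbDensity r → gaussianMollifier m ⋆ r ∈ SobolevBall s B := by
  obtain ⟨C, hC, hweight⟩ := exists_gaussian_mul_sobolevWeight_le hs
  set m := min 1 (B ^ 2 / (C * √(2 * Real.pi)))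
  have hm : 0 < m := lt_min one_pos (by positivity)
  have hm_one : m ≤ 1 := min_le_left _ _
  refine ⟨m, hm, fun r hr => mem_sobolevBall_of_le
    (integrable_gaussianMollifier_convolution hm hr.integrable)
    ((integrable_exp_neg_div_sq hm).const_mul C) (fun ω => ?_) ?_⟩
  · rw [norm_ft_gaussianMollifier_convolution hm hr.integrable]
    calc (Real.exp (-(ω / m) ^ 2 / 2) * ‖ft r ω‖) ^ 2 * (ω ^ 2 + 1) ^ s
        ≤ Real.exp (-(ω / m) ^ 2 / 2) ^ 2 * (ω ^ 2 + 1) ^ s := by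
          gcongr
          exact mul_le_of_le_one_right (Real.exp_pos _).le (hr.norm_ft_le_one ω)
      _ ≤ C * Real.exp (-(ω / m) ^ 2 / 2) := by
          simpa only [max_eq_left hm_one, Real.one_rpow, mul_one]
            using hweight m hm ω
  · calc ∫ ω : ℝ, C * Real.exp (-(ω / m) ^ 2 / 2) = m * (C * √(2 * Real.pi)) := by
          rw [integral_const_mul, integral_exp_neg_div_sq hm]
          ring
      _ ≤ B ^ 2 := (le_div_iff₀ (by positivity)).1 (min_le_right _ _)

lemma integrable_norm_sq_ft (hW : Integrable W) (hW2 : Integrable fun x => W x ^ 2) :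
    Integrable fun ω => ‖ft W ω‖ ^ 2 :=
  integrable_norm_sq_cft hW.ofReal
    ((memLp_two_iff_integrable_sq hW.1).2 hW2).ofReal

lemma integral_norm_sq_ft (hW : Integrable W) (hW2 : Integrable fun x => W x ^ 2) :
    ∫ ω, ‖ft W ω‖ ^ 2 = 2 * Real.pi * ∫ x, W x ^ 2 := by
  refine (integral_norm_sq_cft hW.ofReal
    ((memLp_two_iff_integrable_sq hW.1).2 hW2).ofReal).trans ?_
  simp

lemma exists_gaussianMollifier_convolution_mem_sobolevBall_of_integral_sq_le (hs : 0 ≤ s) :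
    ∃ C > 0, ∀ m, 1 ≤ m → ∀ W : ℝ → ℝ, Integrable W → Integrable (fun x => W x ^ 2) →
      ∀ B, C * m ^ (2 * s) * ∫ x, W x ^ 2 ≤ B ^ 2 → gaussianMollifier m ⋆ W ∈ SobolevBall s B := by
  obtain ⟨C, hC, hweight⟩ := exists_gaussian_mul_sobolevWeight_le hs
  refine ⟨C * (2 * Real.pi), by positivity, fun m hm W hW hW2 B hB => ?_⟩
  have hm0 : 0 < m := by linarith
  refine mem_sobolevBall_of_le (integrable_gaussianMollifier_convolution hm0 hW)
    ((integrable_norm_sq_ft hW hW2).const_mul (C * m ^ (2 * s))) (fun ω => ?_) ?_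
  · have hle : Real.exp (-(ω / m) ^ 2 / 2) ^ 2 * (ω ^ 2 + 1) ^ s ≤ C * m ^ (2 * s) := by
      refine (max_eq_right hm ▸ hweight m hm0 ω).trans (mul_le_of_le_one_right (by positivity) ?_)
      rw [Real.exp_le_one_iff, neg_div]
      exact neg_nonpos.2 (by positivity)
    calc ‖ft (gaussianMollifier m ⋆ W) ω‖ ^ 2 * (ω ^ 2 + 1) ^ s
        = Real.exp (-(ω / m) ^ 2 / 2) ^ 2 * (ω ^ 2 + 1) ^ s * ‖ft W ω‖ ^ 2 := by
          rw [norm_ft_gaussianMollifier_convolution hm0 hW]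
          ring
      _ ≤ C * m ^ (2 * s) * ‖ft W ω‖ ^ 2 := by gcongr
  · rw [integral_const_mul, integral_norm_sq_ft hW hW2]
    linarith

lemma exists_isProbDensity_mem_sobolevBall_heavy_tail (hs : 0 ≤ s) (hB : 0 < B) :
    ∃ p, IsProbDensity p ∧ Integrable (ft p) ∧ p ∈ SobolevBall s B ∧
      ∃ c > 0, ∀ᵐ x, c * (1 + x ^ 2)⁻¹ ≤ p x := by
  obtain ⟨m, hm, hmem⟩ := exists_gaussianMollifier_convolution_mem_sobolevBall hs hB
  have hG := isProbDensity_gaussianMollifier hm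
  obtain ⟨c, hc, htail⟩ := hG.exists_inv_one_add_sq_le_convolution
  exact ⟨gaussianMollifier m ⋆ ProbabilityTheory.cauchyPDFReal 0 1,
    hG.convolution isProbDensity_cauchy,
    integrable_ft_gaussianMollifier_convolution hm isProbDensity_cauchy.integrable,
    hmem _ isProbDensity_cauchy, c * Real.pi⁻¹, by positivity,
    htail _ (by positivity) _ isProbDensity_cauchy.integrable
      (.of_forall fun x => (cauchyPDFReal_zero_one x).ge)⟩

end Sobolev

section Mixture

variable {p k W W₀ W₁ : ℝ → ℝ}

/-- The density `p` with a fraction `∫ W` of its mass replaced by `W` smoothed by the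
kernel `k`. -/
noncomputable def mixture (p k W : ℝ → ℝ) (x : ℝ) : ℝ := (1 - ∫ z, W z) * p x + (k ⋆ W) x

lemma isProbDensity_mixture (hp : IsProbDensity p) (hk : IsProbDensity k) (hW : Integrable W)
    (hW0 : ∀ x, 0 ≤ W x) (hW1 : ∫ x, W x ≤ 1) : IsProbDensity (mixture p k W) where
  nonneg x :=
    add_nonneg (mul_nonneg (by linarith) (hp.nonneg x)) (convolution_nonneg hk.nonneg hW0 x)
  integrable := (hp.integrable.const_mul _).add (hk.integrable.integrable_convolution _ hW)
  integral_eq_one := by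
    simp only [mixture]
    rw [integral_add (hp.integrable.const_mul _) (hk.integrable.integrable_convolution _ hW),
      integral_const_mul, integral_convolution _ hk.integrable hW, hp.integral_eq_one,
      hk.integral_eq_one, ContinuousLinearMap.lsmul_apply, one_smul]
    ring

lemma half_mul_inv_one_add_sq_le_mixture_ae {c : ℝ} (hc : 0 ≤ c)
    (hp : ∀ᵐ x, c * (1 + x ^ 2)⁻¹ ≤ p x) (hk : ∀ x, 0 ≤ k x) (hW0 : ∀ x, 0 ≤ W x)
    (hW1 : ∫ x, W x ≤ 1 / 2) : ∀ᵐ x, c / 2 * (1 + x ^ 2)⁻¹ ≤ mixture p k W x := by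
  filter_upwards [hp] with x hx
  have hconv := convolution_nonneg hk hW0 x
  have htail : 0 ≤ c * (1 + x ^ 2)⁻¹ := by positivity
  simp only [mixture]
  nlinarith

lemma integrable_ft_mixture (hp : Integrable p) (hpft : Integrable (ft p)) (hk : Integrable k)
    (hW : Integrable W) (hkW : Integrable (ft (k ⋆ W))) : Integrable (ft (mixture p k W)) := by
  refine ((hpft.const_mul ((1 - ∫ z, W z : ℝ) : ℂ)).add hkW).congr (.of_forall fun ω => ?_)
  exact (ft_const_mul_add hp (hk.integrable_convolution _ hW) _ ω).symm

lemma mixture_sub_mixture_ae (hk : Integrable k) (hW₀ : Integrable W₀) (hW₁ : Integrable W₁)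
    (heq : ∫ x, W₀ x = ∫ x, W₁ x) :
    mixture p k W₁ - mixture p k W₀ =ᵐ[volume] k ⋆ (W₁ - W₀) := by
  filter_upwards [convolution_sub_convolution_ae hk hW₀ hW₁] with x hx
  rw [← hx]
  simp only [Pi.sub_apply, mixture, heq]
  ring

end Mixture

section SpectralBump

variable {θ : ℝ → ℝ} {ω₀ L m A : ℝ}

/-- A smooth bump function supported in `[1, 2]` and equal to `1` on `[5/4, 7/4]`. -/
noncomputable def dyadicBump : ContDiffBump (3 / 2 : ℝ) := ⟨1 / 4, 1 / 2, by norm_num, by norm_num⟩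

lemma support_dyadicBump_div_subset (hm : 0 < m) :
    (Function.support fun ω => dyadicBump (ω / m)) ⊆ Set.Icc m (2 * m) := by
  intro ω hω
  have hball : ω / m ∈ Metric.ball (3 / 2 : ℝ) (1 / 2) :=
    dyadicBump.support_eq.subset (show ω / m ∈ Function.support dyadicBump from hω)
  rw [Real.ball_eq_Ioo, Set.mem_Ioo, lt_div_iff₀ hm, div_lt_iff₀ hm] at hball
  exact ⟨by linarith [hball.1], by linarith [hball.2]⟩

lemma dyadicBump_div_eq_one (hm : 0 < m) {ω : ℝ} (hω : ω ∈ Set.Icc (5 / 4 * m) (7 / 4 * m)) :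
    dyadicBump (ω / m) = 1 := by
  refine dyadicBump.one_of_mem_closedBall ?_
  rw [Real.closedBall_eq_Icc, show dyadicBump.rIn = 1 / 4 from rfl, Set.mem_Icc, le_div_iff₀ hm,
    div_le_iff₀ hm]
  exact ⟨by linarith [hω.1], by linarith [hω.2]⟩

lemma exists_isC1Bump_dyadicBump_div :
    ∃ C > 0, ∀ m, 1 ≤ m → IsC1Bump (fun ω => (dyadicBump (ω / m) : ℂ)) m (2 * m) C := by
  have hsmooth : ContDiff ℝ 1 dyadicBump := dyadicBump.contDiff
  obtain ⟨C, hC⟩ := (hsmooth.continuous_deriv le_rfl).bounded_above_of_compact_support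
    dyadicBump.hasCompactSupport.deriv
  refine ⟨max 1 C, by positivity, fun m hm => ?_⟩
  have hm0 : 0 < m := by linarith
  have hderiv (ω) : HasDerivAt (fun ω => (dyadicBump (ω / m) : ℂ))
      ((deriv dyadicBump (ω / m) * (1 / m) : ℝ) : ℂ) ω :=
    (((hsmooth.differentiable one_ne_zero _).hasDerivAt).comp ω
      ((hasDerivAt_id ω).div_const m)).ofReal_comp
  refine ⟨fun ω => (hderiv ω).differentiableAt, fun ω => ?_, fun ω => ?_, fun ω hω =>
    support_dyadicBump_div_subset hm0 (Complex.ofReal_ne_zero.1 hω)⟩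
  · rw [Complex.norm_real, Real.norm_of_nonneg dyadicBump.nonneg]
    exact dyadicBump.le_one.trans (le_max_left _ _)
  · rw [(hderiv ω).deriv, Complex.norm_real, norm_mul,
      Real.norm_of_nonneg (by positivity : 0 ≤ 1 / m)]
    exact (mul_le_of_le_one_right (norm_nonneg _) ((div_le_one hm0).2 hm)).trans
      ((hC _).trans (le_max_right _ _))

/-- The bump `A ψ(ω / m) e^{-iθ(ω)}` at frequencies of order `m`. Choosing for `θ` a phase of `φ*`
makes its product with `φ*` nonnegative. -/
noncomputable def spectralBump (θ : ℝ → ℝ) (m A ω : ℝ) : ℂ :=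
  (A * dyadicBump (ω / m) : ℝ) * Complex.exp (-θ ω * Complex.I)

lemma exists_isC1Bump_spectralBump (hθ : ∀ ω, ω₀ < ω → DifferentiableAt ℝ θ ω)
    (hL : ∀ ω, ω₀ < ω → |deriv θ ω| ≤ L) :
    ∃ C > 0, ∀ m A, ω₀ < m → 1 ≤ m → 0 ≤ A →
      IsC1Bump (spectralBump θ m A) m (2 * m) (A * C) := by
  obtain ⟨C, hC, hbump⟩ := exists_isC1Bump_dyadicBump_div
  refine ⟨4 * C * (1 + |L|), by positivity, fun m A hω₀ hm hA => ?_⟩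
  have hderiv (ω) (hω : ω ∈ Set.Icc m (2 * m)) :
      HasDerivAt (fun ω => (A : ℂ) * Complex.exp (-θ ω * Complex.I))
        (A * (Complex.exp (-θ ω * Complex.I) * (-((deriv θ ω : ℝ) : ℂ) * Complex.I))) ω :=
    ((((hθ ω (hω₀.trans_le hω.1)).hasDerivAt.ofReal_comp.neg).mul_const _).cexp).const_mul _
  have hexp (ω : ℝ) : ‖Complex.exp (-θ ω * Complex.I)‖ = 1 := by
    rw [← Complex.ofReal_neg, Complex.norm_exp_ofReal_mul_I]
  have hmul := (hbump m hm).mul (h := fun ω => (A : ℂ) * Complex.exp (-θ ω * Complex.I))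
    (G := 2 * A * (1 + |L|)) (fun ω hω => (hderiv ω hω).differentiableAt) (fun ω _ => ?_)
    (fun ω hω => ?_) (by positivity)
  · convert hmul using 1
    · ext ω
      rw [spectralBump]
      push_cast
      ring
    · ring
  · rw [norm_mul, hexp, Complex.norm_real, Real.norm_of_nonneg hA]
    nlinarith [mul_nonneg hA (abs_nonneg L)]
  · rw [(hderiv ω hω).deriv, norm_mul, norm_mul, hexp, norm_mul, norm_neg, Complex.norm_I,
      Complex.norm_real, Complex.norm_real, Real.norm_of_nonneg hA, Real.norm_eq_abs]
    nlinarith [mul_le_mul_of_nonneg_left ((hL ω (hω₀.trans_le hω.1)).trans (le_abs_self L)) hA,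
      mul_nonneg hA (abs_nonneg L)]

lemma IsC1Bump.mul_ft_gaussianMollifier {V : ℝ → ℂ} {M : ℝ} (hV : IsC1Bump V m (2 * m) M)
    (hm : 1 ≤ m) :
    IsC1Bump (fun ω => V ω * ft (gaussianMollifier m) (-ω)) m (2 * m) (4 * M) := by
  have hm0 : 0 < m := by linarith
  have hle_one (ω : ℝ) : Real.exp (-(ω / m) ^ 2 / 2) ≤ 1 := by
    rw [Real.exp_le_one_iff, neg_div]
    exact neg_nonpos.2 (by positivity)
  have hderiv (ω : ℝ) : HasDerivAt (fun ω => ft (gaussianMollifier m) (-ω))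
      ((Real.exp (-(ω / m) ^ 2 / 2) * (-(ω / m) * (1 / m)) : ℝ) : ℂ) ω := by
    simp only [ft_gaussianMollifier hm0, neg_div, neg_sq]
    have hexponent : HasDerivAt (fun ω : ℝ => -((ω / m) ^ 2 / 2)) (-(ω / m) * (1 / m)) ω := by
      refine ((((hasDerivAt_id ω).div_const m).pow 2).div_const 2).neg.congr_deriv ?_
      simp only [id_eq, Nat.cast_ofNat, Nat.add_one_sub_one, pow_one]
      ring
    exact hexponent.exp.ofReal_comp
  have hmul := hV.mul (G := 2) (fun ω _ => (hderiv ω).differentiableAt) (fun ω _ => ?_)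
    (fun ω hω => ?_) zero_le_two
  · convert hmul using 1
    ring
  · rw [norm_ft_neg]
    linarith [(isProbDensity_gaussianMollifier hm0).norm_ft_le_one ω]
  · have hω_nonneg : 0 ≤ ω / m := div_nonneg (hm0.le.trans hω.1) hm0.le
    rw [(hderiv ω).deriv, Complex.norm_real, norm_mul, norm_mul, norm_neg,
      Real.norm_of_nonneg (Real.exp_pos _).le, Real.norm_of_nonneg hω_nonneg,
      Real.norm_of_nonneg (by positivity)]
    calc Real.exp (-(ω / m) ^ 2 / 2) * (ω / m * (1 / m)) ≤ 1 * (2 * 1) := by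
          gcongr
          · exact hle_one ω
          · exact (div_le_iff₀ hm0).2 hω.2
          · exact (div_le_one hm0).2 hm
      _ = 2 := by norm_num

lemma rpow_neg_half_le_rpow_neg {α ω : ℝ} (hα : 0 ≤ α) (hm : 0 < m) (hω : m ≤ ω) :
    (ω ^ 2 + 1) ^ (-(α / 2)) ≤ m ^ (-α) := by
  calc (ω ^ 2 + 1) ^ (-(α / 2)) ≤ (m ^ 2) ^ (-(α / 2)) :=
        Real.rpow_le_rpow_of_nonpos (by positivity) (by nlinarith) (by linarith)
    _ = m ^ (-α) := by
        rw [← Real.rpow_natCast m 2, ← Real.rpow_mul hm.le]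
        congr 1
        push_cast
        ring

lemma IsC1Bump.mul_ft_neg {g : ℝ → ℝ} {Cg α : ℝ} {V : ℝ → ℂ} {M : ℝ}
    (hV : IsC1Bump V m (2 * m) M) (hα : 0 ≤ α) (hm : 0 < m) (hω₀ : ω₀ < m)
    (hg : ∀ ω, ω₀ < ω → DifferentiableAt ℝ (ft g) ω)
    (hg_le : ∀ ω, ω₀ < ω → ‖ft g ω‖ ≤ Cg * (ω ^ 2 + 1) ^ (-(α / 2)))
    (hg_deriv_le : ∀ ω, ω₀ < ω → ‖deriv (ft g) ω‖ ≤ Cg * (ω ^ 2 + 1) ^ (-(α / 2))) :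
    IsC1Bump (fun ω => V ω * ft g (-ω)) m (2 * m) (2 * M * (Cg * m ^ (-α))) := by
  have hCg : 0 ≤ Cg := nonneg_of_mul_nonneg_left
    ((norm_nonneg _).trans (hg_le m hω₀)) (by positivity)
  have hbound (ω) (hω : ω ∈ Set.Icc m (2 * m)) :
      Cg * (ω ^ 2 + 1) ^ (-(α / 2)) ≤ Cg * m ^ (-α) :=
    mul_le_mul_of_nonneg_left (rpow_neg_half_le_rpow_neg hα hm hω.1) hCg
  have hconj : (fun ω => ft g (-ω)) = fun ω => star (ft g ω) := by
    ext ω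
    exact (ft_conj g ω).symm
  refine hV.mul (fun ω hω => ?_) (fun ω hω => ?_) (fun ω hω => ?_) (by positivity)
  · rw [hconj]
    exact (hg ω (hω₀.trans_le hω.1)).star
  · rw [norm_ft_neg]
    exact (hg_le ω (hω₀.trans_le hω.1)).trans (hbound ω hω)
  · rw [hconj, deriv.star, norm_star]
    exact (hg_deriv_le ω (hω₀.trans_le hω.1)).trans (hbound ω hω)

end SpectralBump

section LinearFunctional

variable {φ f θ : ℝ → ℝ} {V : ℝ → ℂ} {a b M m A : ℝ}

/-- The functional `Φ(f) = (2π)⁻¹ ∫ f*(ω) φ*(-ω) dω`. -/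
noncomputable def linearFunctional (φ f : ℝ → ℝ) : ℂ :=
  (1 / (2 * Real.pi) : ℂ) * ∫ ω : ℝ, ft f ω * ft φ (-ω)

lemma integrable_of_ft_ne_zero {ω : ℝ} (h : ft φ ω ≠ 0) : Integrable φ := by
  by_contra hφ
  refine h (integral_undef fun hint => hφ ?_)
  have hmeas : Continuous fun x : ℝ => Complex.exp (-(Complex.I * ω * x)) := by fun_prop
  refine (hint.bdd_mul (c := 1) hmeas.aestronglyMeasurable (.of_forall fun x => ?_)).re.congr
    (.of_forall fun x => ?_)
  · rw [Complex.exp_neg, norm_inv, norm_exp_I_mul_mul, inv_one]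
  · beta_reduce
    rw [← mul_assoc, ← Complex.exp_add, neg_add_cancel, Complex.exp_zero, one_mul]
    rfl

lemma integrable_ft_mul_ft (hf : Integrable (ft f)) (hφ : Integrable φ) :
    Integrable fun ω => ft f ω * ft φ (-ω) :=
  hf.mul_bdd ((continuous_ft hφ).comp continuous_neg).aestronglyMeasurable
    (.of_forall fun ω => norm_cft_le _ (-ω))

lemma integrable_norm_ft_mul_norm_ft (hf : Integrable (ft f)) (hφ : Integrable φ) :
    Integrable fun ω => ‖ft f ω‖ * ‖ft φ ω‖ := by
  simpa only [norm_mul, norm_ft_neg] using (integrable_ft_mul_ft hf hφ).norm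

lemma IsC1Bump.linearFunctional_realSynthesis (hV : IsC1Bump V a b M) (hφ : Integrable φ) :
    linearFunctional φ (realSynthesis V) = (2 * (∫ ω, V ω * ft φ ω).re : ℝ) := by
  have hint : Integrable fun ω => V ω * ft φ ω :=
    hV.integrable.mul_bdd (continuous_ft hφ).aestronglyMeasurable
      (.of_forall fun ω => norm_cft_le _ ω)
  have hconj : Integrable fun ω => starRingEnd ℂ (V ω * ft φ ω) :=
    Complex.conjLIE.integrable_comp_iff.2 hint
  calc linearFunctional φ (realSynthesis V)
      = ∫ ω, (V (-ω) * ft φ (-ω) + starRingEnd ℂ (V ω * ft φ ω)) := by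
        rw [linearFunctional, ← integral_const_mul]
        refine integral_congr_ae (.of_forall fun ω => ?_)
        simp only [hV.ft_realSynthesis, map_mul, ft_conj]
        field_simp
    _ = (∫ ω, V ω * ft φ ω) + starRingEnd ℂ (∫ ω, V ω * ft φ ω) := by
        rw [integral_add hint.comp_neg hconj, integral_neg_eq_self (fun ω => V ω * ft φ ω),
          integral_conj]
    _ = (2 * (∫ ω, V ω * ft φ ω).re : ℝ) := Complex.add_conj _

lemma spectralBump_mul_eq {z : ℂ} {ω : ℝ} (hz : z = ‖z‖ * Complex.exp (θ ω * Complex.I)) :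
    spectralBump θ m A ω * z = (A * dyadicBump (ω / m) * ‖z‖ : ℝ) := by
  have hexp : Complex.exp (-θ ω * Complex.I) * Complex.exp (θ ω * Complex.I) = 1 := by
    rw [← Complex.exp_add, neg_mul, neg_add_cancel, Complex.exp_zero]
  rw [spectralBump]
  nth_rw 1 [hz]
  push_cast
  linear_combination ((A : ℂ) * dyadicBump (ω / m) * ‖z‖) * hexp

lemma five_rpow_mul_rpow_neg_le {ω : ℝ} (hm : 1 ≤ m) (hω : ω ∈ Set.Icc m (2 * m)) :
    5 ^ (-(|a| / 2)) * m ^ (-a) ≤ (ω ^ 2 + 1) ^ (-(a / 2)) := by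
  have hm0 : 0 < m := by linarith
  set r := (ω ^ 2 + 1) / m ^ 2 with hr
  have hr_one : 1 ≤ r := (one_le_div₀ (by positivity)).2 (by nlinarith [hω.1])
  have hr_five : r ≤ 5 := (div_le_iff₀ (by positivity)).2 (by nlinarith [hω.1, hω.2])
  calc 5 ^ (-(|a| / 2)) * m ^ (-a) ≤ r ^ (-(a / 2)) * m ^ (-a) := by
        gcongr
        exact (Real.rpow_le_rpow_of_nonpos (by positivity) hr_five
          (by linarith [abs_nonneg a])).trans
          (Real.rpow_le_rpow_of_exponent_le hr_one (by linarith [le_abs_self a]))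
    _ = r ^ (-(a / 2)) * (m ^ 2) ^ (-(a / 2)) := by
        rw [← Real.rpow_natCast m 2, ← Real.rpow_mul hm0.le]
        congr 2
        push_cast
        ring
    _ = (ω ^ 2 + 1) ^ (-(a / 2)) := by
        rw [← Real.mul_rpow (by positivity) (by positivity), hr,
          div_mul_cancel₀ _ (by positivity)]

end LinearFunctional

section FunctionalLowerBound

variable {φ θ : ℝ → ℝ} {ω₀ a m A Cφ M : ℝ}

lemma spectralBump_mul_ft_gaussianMollifier_mul_ft (hm : 0 < m) (hω₀ : ω₀ < m)
    (hphase : ∀ ω, ω₀ < ω → ft φ ω = ‖ft φ ω‖ * Complex.exp (θ ω * Complex.I)) (ω : ℝ) :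
    spectralBump θ m A ω * ft (gaussianMollifier m) (-ω) * ft φ ω =
      (A * dyadicBump (ω / m) * ‖ft φ ω‖ * Real.exp (-(ω / m) ^ 2 / 2) : ℝ) := by
  rw [ft_gaussianMollifier hm, neg_div m ω, neg_sq, mul_right_comm]
  by_cases hω : ω ∈ Set.Icc m (2 * m)
  · rw [spectralBump_mul_eq (hphase ω (hω₀.trans_le hω.1)), ← Complex.ofReal_mul]
  · have hzero : dyadicBump (ω / m) = 0 :=
      Function.notMem_support.1 fun h => hω (support_dyadicBump_div_subset hm h)
    simp only [spectralBump, hzero, mul_zero, zero_mul, Complex.ofReal_zero]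

lemma le_norm_linearFunctional_realSynthesis (hφ : Integrable φ) (hω₀ : ω₀ < m) (hm : 1 ≤ m)
    (hA : 0 ≤ A) (hV : IsC1Bump (spectralBump θ m A) m (2 * m) M)
    (hphase : ∀ ω, ω₀ < ω → ft φ ω = ‖ft φ ω‖ * Complex.exp (θ ω * Complex.I)) (hCφ : 0 ≤ Cφ)
    (hφ_ge : ∀ ω, ω₀ < ω → Cφ * (ω ^ 2 + 1) ^ (-(a / 2)) ≤ ‖ft φ ω‖) :
    Real.exp (-2) * 5 ^ (-(|a| / 2)) * Cφ * (A * (m * m ^ (-a))) ≤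
      ‖linearFunctional φ (gaussianMollifier m ⋆ realSynthesis (spectralBump θ m A))‖ := by
  have hm0 : 0 < m := by linarith
  have hW := hV.mul_ft_gaussianMollifier hm
  have hint := (hW.integrable.mul_bdd (continuous_ft hφ).aestronglyMeasurable
    (.of_forall fun ω => norm_cft_le _ ω)).re
  rw [convolution_realSynthesis (isProbDensity_gaussianMollifier hm0).integrable hV.integrable,
    hW.linearFunctional_realSynthesis hφ, Complex.norm_real]
  simp only [spectralBump_mul_ft_gaussianMollifier_mul_ft hm0 hω₀ hphase] at hint ⊢
  rw [integral_complex_ofReal, Complex.ofReal_re]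
  refine le_trans ?_ (le_abs_self _)
  set F : ℝ → ℝ := fun ω => A * dyadicBump (ω / m) * ‖ft φ ω‖ * Real.exp (-(ω / m) ^ 2 / 2)
  have hF_nonneg : 0 ≤ᵐ[volume] F := .of_forall fun ω =>
    mul_nonneg (mul_nonneg (mul_nonneg hA dyadicBump.nonneg) (norm_nonneg _)) (Real.exp_pos _).le
  have hF_ge (ω) (hω : ω ∈ Set.Icc (5 / 4 * m) (7 / 4 * m)) :
      A * (Cφ * (5 ^ (-(|a| / 2)) * m ^ (-a))) * Real.exp (-2) ≤ F ω := by
    have hω' : ω ∈ Set.Icc m (2 * m) := ⟨by linarith [hω.1], by linarith [hω.2]⟩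
    have hsq : (ω / m) ^ 2 ≤ 2 ^ 2 :=
      pow_le_pow_left₀ (div_nonneg (hm0.le.trans hω'.1) hm0.le) ((div_le_iff₀ hm0).2 hω'.2) 2
    simp only [F, dyadicBump_div_eq_one hm0 hω, mul_one]
    gcongr
    · exact (mul_le_mul_of_nonneg_left (five_rpow_mul_rpow_neg_le hm hω') hCφ).trans
        (hφ_ge ω (hω₀.trans_le hω'.1))
    · linarith
  have hset := (setIntegral_ge_of_const_le_real measurableSet_Icc measure_Icc_lt_top.ne hF_ge
    hint.integrableOn).trans (setIntegral_le_integral hint hF_nonneg)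
  rw [Real.volume_real_Icc_of_le (by linarith)] at hset
  linarith

end FunctionalLowerBound

section ConvolutionModel

variable {g φ f₀ f₁ r : ℝ → ℝ} {s B c : ℝ} {n : ℕ}

/-- The mean squared error of the estimator `T` of `Φ(f)` from `n` independent observations with
density `g ⋆ f`. -/
noncomputable def quadraticRisk (g φ : ℝ → ℝ) {n : ℕ} (T : (Fin n → ℝ) → ℂ) (f : ℝ → ℝ) : ENNReal :=
  ∫⁻ y, ENNReal.ofReal (‖T y - linearFunctional φ f‖ ^ 2 * ∏ i, (g ⋆ f) (y i))

lemma linearFunctional_sub (hf₀ : Integrable f₀) (hf₁ : Integrable f₁)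
    (hft₀ : Integrable (ft f₀)) (hft₁ : Integrable (ft f₁)) (hφ : Integrable φ) :
    linearFunctional φ (f₁ - f₀) = linearFunctional φ f₁ - linearFunctional φ f₀ := by
  have hft (ω : ℝ) : ft (f₁ - f₀) ω = ft f₁ ω - ft f₀ ω := by
    have h := ft_const_mul_add hf₀ hf₁ (-1) ω
    rw [show (fun x => -1 * f₀ x + f₁ x) = f₁ - f₀ by ext x; simp only [Pi.sub_apply]; ring] at h
    rw [h]
    push_cast
    ring
  simp only [linearFunctional, hft, sub_mul]
  rw [integral_sub (integrable_ft_mul_ft hft₁ hφ) (integrable_ft_mul_ft hft₀ hφ), mul_sub]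

lemma linearFunctional_congr_ae (h : f₀ =ᵐ[volume] f₁) :
    linearFunctional φ f₀ = linearFunctional φ f₁ := by
  have hft : ft f₀ = ft f₁ := by
    ext ω
    refine integral_congr_ae ?_
    filter_upwards [h] with x hx
    rw [hx]
  rw [linearFunctional, linearFunctional, hft]

lemma chiSq_le_of_heavy_tail {d q : ℝ → ℝ} (hc : 0 < c) (hq : AEStronglyMeasurable q)
    (hd : AEStronglyMeasurable d) (htail : ∀ᵐ y, c * (1 + y ^ 2)⁻¹ ≤ q y)
    (hint : Integrable fun y => (1 + y ^ 2) * d y ^ 2) :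
    Integrable (fun y => d y ^ 2 / q y) ∧
      ∫ y, d y ^ 2 / q y ≤ c⁻¹ * ∫ y, (1 + y ^ 2) * d y ^ 2 := by
  have hle : ∀ᵐ y, 0 ≤ d y ^ 2 / q y ∧ d y ^ 2 / q y ≤ c⁻¹ * ((1 + y ^ 2) * d y ^ 2) := by
    filter_upwards [htail] with y hy
    have hpos : 0 < c * (1 + y ^ 2)⁻¹ := by positivity
    refine ⟨div_nonneg (sq_nonneg _) (hpos.le.trans hy), ?_⟩
    calc d y ^ 2 / q y ≤ d y ^ 2 / (c * (1 + y ^ 2)⁻¹) := by gcongr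
      _ = c⁻¹ * ((1 + y ^ 2) * d y ^ 2) := by field_simp
  have hmeas : AEStronglyMeasurable (fun y => d y ^ 2 / q y) :=
    ((hd.aemeasurable.pow_const 2).div hq.aemeasurable).aestronglyMeasurable
  have hquot : Integrable (fun y => d y ^ 2 / q y) :=
    (hint.const_mul c⁻¹).mono' hmeas (hle.mono fun y hy => by
      rw [Real.norm_of_nonneg hy.1]
      exact hy.2)
  refine ⟨hquot, ?_⟩
  rw [← integral_const_mul]
  exact integral_mono_ae hquot (hint.const_mul c⁻¹) (hle.mono fun y hy => hy.2)

lemma le_quadraticRisk_or_le_quadraticRisk (hg : IsProbDensity g) (hφ : Integrable φ)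
    (h₀ : IsProbDensity f₀) (h₁ : IsProbDensity f₁) (hft₀ : Integrable (ft f₀))
    (hft₁ : Integrable (ft f₁)) (hsub : f₁ - f₀ =ᵐ[volume] r) (hc : 0 < c)
    (htail : ∀ᵐ y, c * (1 + y ^ 2)⁻¹ ≤ (g ⋆ f₀) y)
    (hint : Integrable fun y => (1 + y ^ 2) * (g ⋆ r) y ^ 2)
    (hle : n * ∫ y, (1 + y ^ 2) * (g ⋆ r) y ^ 2 ≤ c) {T : (Fin n → ℝ) → ℂ}
    (hT : AEStronglyMeasurable T) :
    ENNReal.ofReal (‖linearFunctional φ r‖ ^ 2 / 32) ≤ quadraticRisk g φ T f₀ ∨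
      ENNReal.ofReal (‖linearFunctional φ r‖ ^ 2 / 32) ≤ quadraticRisk g φ T f₁ := by
  have hq₀ := hg.convolution h₀
  have hq₁ := hg.convolution h₁
  have hqsub : g ⋆ f₁ - g ⋆ f₀ =ᵐ[volume] g ⋆ r := by
    rw [← convolution_congr _ (Filter.EventuallyEq.refl _ g) hsub]
    exact convolution_sub_convolution_ae hg.integrable h₀.integrable h₁.integrable
  obtain ⟨hχ_int, hχ_le⟩ := chiSq_le_of_heavy_tail hc hq₀.integrable.aestronglyMeasurable
    ((hq₁.integrable.sub hq₀.integrable).aestronglyMeasurable.congr hqsub) htail hint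
  have hχ : (fun y => (g ⋆ r) y ^ 2 / (g ⋆ f₀) y) =ᵐ[volume]
      fun y => ((g ⋆ f₁) y - (g ⋆ f₀) y) ^ 2 / (g ⋆ f₀) y := by
    filter_upwards [hqsub] with y hy
    rw [← hy, Pi.sub_apply]
  have hpos : ∀ᵐ y, 0 < (g ⋆ f₀) y := htail.mono fun y hy => lt_of_lt_of_le (by positivity) hy
  rw [← linearFunctional_congr_ae hsub,
    linearFunctional_sub h₀.integrable h₁.integrable hft₀ hft₁ hφ]
  refine hq₀.two_point_risk_pi hq₁ hpos (hχ_int.congr hχ) ?_ hT _ _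
  rw [← integral_congr_ae hχ]
  calc n * ∫ y, (g ⋆ r) y ^ 2 / (g ⋆ f₀) y
      ≤ n * (c⁻¹ * ∫ y, (1 + y ^ 2) * (g ⋆ r) y ^ 2) := by gcongr
    _ = c⁻¹ * (n * ∫ y, (1 + y ^ 2) * (g ⋆ r) y ^ 2) := by ring
    _ ≤ c⁻¹ * c := by gcongr
    _ = 1 := inv_mul_cancel₀ hc.ne'

/-- A perturbation `u` whose positive and negative parts, smoothed at scale `1 / m` and mixed into a
heavy-tailed density, give two densities in a Sobolev ball of smoothness `s` that `n` observations
cannot tell apart. The constant `c` measures both requirements. -/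
structure IsAdmissiblePerturbation (g : ℝ → ℝ) (s c m : ℝ) (n : ℕ) (u : ℝ → ℝ) : Prop where
  integrable : Integrable u
  integral_eq_zero : ∫ x, u x = 0
  integral_abs_le : ∫ x, |u x| ≤ 1 / 2
  integrable_sq : Integrable fun x => u x ^ 2
  sobolev_le : m ^ (2 * s) * ∫ x, u x ^ 2 ≤ c
  integrable_chiSq : Integrable fun y => (1 + y ^ 2) * (g ⋆ (gaussianMollifier m ⋆ u)) y ^ 2
  chiSq_le : n * ∫ y, (1 + y ^ 2) * (g ⋆ (gaussianMollifier m ⋆ u)) y ^ 2 ≤ c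

lemma exists_mixture_mem_sobolevBall_heavy_tail (hg : IsProbDensity g) (hs : 0 ≤ s) (hB : 0 < B) :
    ∃ p, ∃ c > 0, ∀ m, 1 ≤ m → ∀ W : ℝ → ℝ, Integrable W → (∀ x, 0 ≤ W x) → ∫ x, W x ≤ 1 / 2 →
      Integrable (fun x => W x ^ 2) → m ^ (2 * s) * ∫ x, W x ^ 2 ≤ c →
      IsProbDensity (mixture p (gaussianMollifier m) W) ∧
        mixture p (gaussianMollifier m) W ∈ SobolevBall s B ∧
        Integrable (ft (mixture p (gaussianMollifier m) W)) ∧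
        ∀ᵐ y, c * (1 + y ^ 2)⁻¹ ≤ (g ⋆ mixture p (gaussianMollifier m) W) y := by
  obtain ⟨p, hp, hpft, hpB, cp, hcp, hptail⟩ :=
    exists_isProbDensity_mem_sobolevBall_heavy_tail hs (half_pos hB)
  obtain ⟨C, hC, hsmooth⟩ :=
    exists_gaussianMollifier_convolution_mem_sobolevBall_of_integral_sq_le hs
  obtain ⟨cg, hcg, hgtail⟩ := hg.exists_inv_one_add_sq_le_convolution
  refine ⟨p, min ((B / 2) ^ 2 / C) (cg * (cp / 2)), by positivity,
    fun m hm W hW hW_nonneg hW_le hW2 hWs => ?_⟩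
  have hm0 : 0 < m := by linarith
  have hk := isProbDensity_gaussianMollifier hm0
  have hmix := isProbDensity_mixture hp hk hW hW_nonneg (by linarith)
  have hint_nonneg : 0 ≤ ∫ x, W x := integral_nonneg hW_nonneg
  refine ⟨hmix, const_mul_add_mem_sobolevBall hp.integrable
      (integrable_gaussianMollifier_convolution hm0 hW) (abs_le.2 ⟨by linarith, by linarith⟩) hpB
      (hsmooth m hm W hW hW2 _ ?_),
    integrable_ft_mixture hp.integrable hpft hk.integrable hW
      (integrable_ft_gaussianMollifier_convolution hm0 hW), ?_⟩
  · rw [mul_assoc, mul_comm]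
    exact (le_div_iff₀ hC).1 (hWs.trans (min_le_left _ _))
  · filter_upwards [hgtail _ (by positivity) _ hmix.integrable
      (half_mul_inv_one_add_sq_le_mixture_ae hcp.le hptail hk.nonneg hW_nonneg hW_le)] with y hy
    refine le_trans ?_ hy
    gcongr
    exact min_le_right _ _

lemma exists_le_quadraticRisk_of_isAdmissiblePerturbation (hg : IsProbDensity g)
    (hφ : Integrable φ) (hs : 0 ≤ s) (hB : 0 < B) :
    ∃ c > 0, ∀ m, 1 ≤ m → ∀ n u, IsAdmissiblePerturbation g s c m n u →
      ∀ T : (Fin n → ℝ) → ℂ, AEStronglyMeasurable T →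
        ∃ f, IsProbDensity f ∧ f ∈ SobolevBall s B ∧ Integrable (ft f) ∧
          ENNReal.ofReal (‖linearFunctional φ (gaussianMollifier m ⋆ u)‖ ^ 2 / 32) ≤
            quadraticRisk g φ T f := by
  obtain ⟨p, c, hc, hmix⟩ := exists_mixture_mem_sobolevBall_heavy_tail hg hs hB
  refine ⟨c, hc, fun m hm n u hu T hT => ?_⟩
  have hmix_part (W : ℝ → ℝ) (hW : Integrable W) (hW_nonneg : ∀ x, 0 ≤ W x)
      (hle : ∀ x, W x ≤ |u x|) := by
    have hsq (x) : W x ^ 2 ≤ u x ^ 2 := sq_abs (u x) ▸ pow_le_pow_left₀ (hW_nonneg x) (hle x) 2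
    have hW2 : Integrable fun x => W x ^ 2 :=
      hu.integrable_sq.mono' (hW.1.pow 2) (.of_forall fun x => by
        rw [Real.norm_of_nonneg (sq_nonneg _)]
        exact hsq x)
    exact hmix m hm W hW hW_nonneg
      ((integral_mono hW hu.integrable.abs hle).trans hu.integral_abs_le) hW2
      ((mul_le_mul_of_nonneg_left (integral_mono hW2 hu.integrable_sq hsq)
        (by positivity)).trans hu.sobolev_le)
  have hpos_int : Integrable u⁺ := hu.integrable.pos_part
  have hneg_int : Integrable u⁻ := hu.integrable.neg_part
  have heq : ∫ x, u⁻ x = ∫ x, u⁺ x := by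
    rw [← sub_eq_zero, ← neg_eq_zero, neg_sub, ← integral_sub hpos_int hneg_int,
      ← hu.integral_eq_zero]
    exact integral_congr_ae (.of_forall fun x => congrFun (posPart_sub_negPart u) x)
  obtain ⟨h₀, hB₀, hft₀, htail₀⟩ := hmix_part u⁻ hneg_int (fun x => negPart_nonneg (u x))
    fun x => max_le (neg_le_abs _) (abs_nonneg _)
  obtain ⟨h₁, hB₁, hft₁, -⟩ := hmix_part u⁺ hpos_int (fun x => posPart_nonneg (u x))
    fun x => max_le (le_abs_self _) (abs_nonneg _)
  have hsub := mixture_sub_mixture_ae (p := p)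
    (isProbDensity_gaussianMollifier (by linarith : 0 < m)).integrable hneg_int hpos_int heq
  rw [posPart_sub_negPart] at hsub
  rcases le_quadraticRisk_or_le_quadraticRisk hg hφ h₀ h₁ hft₀ hft₁ hsub hc htail₀
    hu.integrable_chiSq hu.chiSq_le hT with h | h
  exacts [⟨_, h₀, hB₀, hft₀, h⟩, ⟨_, h₁, hB₁, hft₁, h⟩]

end ConvolutionModel

section Rate

variable {g : ℝ → ℝ} {V : ℝ → ℂ} {ω₀ s α a c c₀ m M K Cg : ℝ} {n : ℕ}

lemma IsC1Bump.isAdmissiblePerturbation_realSynthesis (hV : IsC1Bump V m (2 * m) M)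
    (hg : Integrable g) (hα : 0 ≤ α) (hω₀ : ω₀ < m) (hm : 1 ≤ m)
    (hg_diff : ∀ ω, ω₀ < ω → DifferentiableAt ℝ (ft g) ω)
    (hg_le : ∀ ω, ω₀ < ω → ‖ft g ω‖ ≤ Cg * (ω ^ 2 + 1) ^ (-(α / 2)))
    (hg_deriv_le : ∀ ω, ω₀ < ω → ‖deriv (ft g) ω‖ ≤ Cg * (ω ^ 2 + 1) ^ (-(α / 2)))
    (hmass : 64 * Real.pi ^ 2 * (M ^ 2 * m) ≤ 1)
    (hsobolev : 8 * Real.pi * (M ^ 2 * (m * m ^ (2 * s))) ≤ c)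
    (hχ : n * (16 * Real.pi * ((8 * M * (Cg * m ^ (-α))) ^ 2 * m)) ≤ c) :
    IsAdmissiblePerturbation g s c m n (realSynthesis V) := by
  have hm0 : 0 < m := by linarith
  have hle : m ≤ 2 * m := by linarith
  have hk := (isProbDensity_gaussianMollifier hm0).integrable
  have hVk := hV.mul_ft_gaussianMollifier hm
  have hVkg := hVk.mul_ft_neg hα hm0 hω₀ hg_diff hg_le hg_deriv_le
  have hconv : g ⋆ (gaussianMollifier m ⋆ realSynthesis V) =
      realSynthesis fun ω => V ω * ft (gaussianMollifier m) (-ω) * ft g (-ω) := by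
    rw [convolution_realSynthesis hk hV.integrable, convolution_realSynthesis hg hVk.integrable]
  refine ⟨hV.integrable_realSynthesis, hV.integral_realSynthesis hm0, ?_,
    hV.integrable_sq_realSynthesis, ?_, ?_, ?_⟩
  · refine (pow_le_pow_iff_left₀ (integral_nonneg fun x => abs_nonneg _) (by norm_num)
      two_ne_zero).1 ?_
    linarith [hV.sq_integral_abs_realSynthesis_le hle]
  · calc m ^ (2 * s) * ∫ x, realSynthesis V x ^ 2
        ≤ m ^ (2 * s) * (8 * Real.pi * (M ^ 2 * (2 * m - m))) := by
          gcongr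
          exact hV.integral_sq_realSynthesis_le hle
      _ = 8 * Real.pi * (M ^ 2 * (m * m ^ (2 * s))) := by ring
      _ ≤ c := hsobolev
  · rw [hconv]
    exact hVkg.integrable_one_add_sq_mul_sq_realSynthesis
  · rw [hconv]
    refine le_trans ?_ hχ
    gcongr
    refine (hVkg.integral_one_add_sq_mul_sq_realSynthesis_le hle).trans_eq ?_
    ring

lemma exists_isAdmissiblePerturbation_realSynthesis (hg : Integrable g) (hs : 0 ≤ s) (hα : 0 ≤ α)
    (hg_diff : ∀ ω, ω₀ < ω → DifferentiableAt ℝ (ft g) ω)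
    (hg_le : ∀ ω, ω₀ < ω → ‖ft g ω‖ ≤ Cg * (ω ^ 2 + 1) ^ (-(α / 2)))
    (hg_deriv_le : ∀ ω, ω₀ < ω → ‖deriv (ft g) ω‖ ≤ Cg * (ω ^ 2 + 1) ^ (-(α / 2)))
    (hK : 0 < K) (hc : 0 < c) :
    ∃ c₀ > 0, ∀ (n : ℕ) (m A : ℝ) (V : ℝ → ℂ), ω₀ < m → 1 ≤ m →
      IsC1Bump V m (2 * m) (A * K) → A ^ 2 * (m * m ^ (2 * s)) ≤ c₀ →
      n * (A ^ 2 * (m * (m ^ (-α)) ^ 2)) ≤ c₀ →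
      IsAdmissiblePerturbation g s c m n (realSynthesis V) := by
  set c₀ := min (1 / (64 * Real.pi ^ 2 * K ^ 2)) (min (c / (8 * Real.pi * K ^ 2))
    (c / (1024 * Real.pi * K ^ 2 * (Cg ^ 2 + 1))))
  refine ⟨c₀, by positivity, fun n m A V hω₀ hm hV hsobolev hχ => ?_⟩
  have hm0 : 0 < m := by linarith
  have hmass : A ^ 2 * m ≤ c₀ := by
    refine le_trans ?_ hsobolev
    gcongr
    exact le_mul_of_one_le_right hm0.le (Real.one_le_rpow hm (by linarith))
  have hmass' := hmass.trans (min_le_left _ _)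
  have hsobolev' := hsobolev.trans ((min_le_right _ _).trans (min_le_left _ _))
  have hχ' := hχ.trans ((min_le_right _ _).trans (min_le_right _ _))
  rw [le_div_iff₀ (by positivity)] at hmass' hsobolev' hχ'
  refine hV.isAdmissiblePerturbation_realSynthesis hg hα hω₀ hm hg_diff hg_le hg_deriv_le
    (by linarith) (by linarith) (le_trans ?_ hχ')
  calc n * (16 * Real.pi * ((8 * (A * K) * (Cg * m ^ (-α))) ^ 2 * m))
      = n * (A ^ 2 * (m * (m ^ (-α)) ^ 2)) * (1024 * Real.pi * K ^ 2 * Cg ^ 2) := by ring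
    _ ≤ n * (A ^ 2 * (m * (m ^ (-α)) ^ 2)) * (1024 * Real.pi * K ^ 2 * (Cg ^ 2 + 1)) := by
        gcongr
        linarith

lemma eventually_exists_scale_of_exponents {γ β e : ℝ} (ω₀ : ℝ) (hc₀ : 0 < c₀) (hγ : 0 < γ)
    (hsobolev : 1 + 2 * s ≤ 2 * β) (hχ : γ + 1 - 2 * α ≤ 2 * β)
    (he : γ * e = 2 - 2 * a - 2 * β) :
    ∀ᶠ n : ℕ in Filter.atTop, ∃ m A : ℝ, ω₀ < m ∧ 1 ≤ m ∧ 0 ≤ A ∧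
      A ^ 2 * (m * m ^ (2 * s)) ≤ c₀ ∧ n * (A ^ 2 * (m * (m ^ (-α)) ^ 2)) ≤ c₀ ∧
      (A * (m * m ^ (-a))) ^ 2 = c₀ * (n : ℝ) ^ e := by
  have hscale : Filter.Tendsto (fun n : ℕ => (n : ℝ) ^ (1 / γ)) Filter.atTop Filter.atTop :=
    (tendsto_rpow_atTop (by positivity)).comp tendsto_natCast_atTop_atTop
  filter_upwards [hscale.eventually_gt_atTop (max 1 ω₀)] with n hn
  set m : ℝ := (n : ℝ) ^ (1 / γ) with hm_def
  obtain ⟨hm, hω₀⟩ := max_lt_iff.1 hn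
  have hm0 : 0 < m := by linarith
  have hn_eq : (n : ℝ) = m ^ γ := by
    rw [hm_def, ← Real.rpow_mul (Nat.cast_nonneg n), one_div_mul_cancel hγ.ne', Real.rpow_one]
  have hsq (x : ℝ) : (m ^ x) ^ 2 = m ^ (x + x) := by rw [sq, Real.rpow_add hm0]
  have hA : (√c₀ * m ^ (-β)) ^ 2 = c₀ * m ^ (-β + -β) := by
    rw [mul_pow, Real.sq_sqrt hc₀.le, hsq]
  have hpow_le {x : ℝ} (hx : x ≤ 0) : c₀ * m ^ x ≤ c₀ :=
    mul_le_of_le_one_right hc₀.le (Real.rpow_le_one_of_one_le_of_nonpos hm.le hx)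
  refine ⟨m, √c₀ * m ^ (-β), hω₀, hm.le, by positivity, ?_, ?_, ?_⟩
  · rw [hA]
    calc c₀ * m ^ (-β + -β) * (m * m ^ (2 * s)) = c₀ * m ^ (-β + -β + (1 + 2 * s)) := by
          simp only [Real.rpow_add hm0, Real.rpow_one]
          ring
      _ ≤ c₀ := hpow_le (by linarith)
  · rw [hA, hsq, hn_eq]
    calc m ^ γ * (c₀ * m ^ (-β + -β) * (m * m ^ (-α + -α)))
        = c₀ * m ^ (γ + (-β + -β + (1 + (-α + -α)))) := by
          simp only [Real.rpow_add hm0, Real.rpow_one]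
          ring
      _ ≤ c₀ := hpow_le (by linarith)
  · rw [mul_pow, hA, mul_pow, hsq, hn_eq, ← Real.rpow_mul hm0.le, he,
      show 2 - 2 * a - 2 * β = -β + -β + (1 + 1 + (-a + -a)) by ring]
    simp only [Real.rpow_add hm0, Real.rpow_one]
    ring

lemma eventually_exists_scale (ω₀ : ℝ) (hs : 0 ≤ s) (hα : 0 ≤ α) (ha : s + α = 0 → a < 1 / 2)
    (hc₀ : 0 < c₀) :
    ∀ᶠ n : ℕ in Filter.atTop, ∃ m A : ℝ, ω₀ < m ∧ 1 ≤ m ∧ 0 ≤ A ∧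
      A ^ 2 * (m * m ^ (2 * s)) ≤ c₀ ∧ n * (A ^ 2 * (m * (m ^ (-α)) ^ 2)) ≤ c₀ ∧
      (A * (m * m ^ (-a))) ^ 2 =
        c₀ * (n : ℝ) ^ (-((2 * s + 2 * a - 1) / (2 * s + 2 * α))) := by
  rcases (add_nonneg hs hα).eq_or_lt with h | h
  -- Here the rate `n ^ (x / 0)` is constant.
  · have ha := ha h.symm
    refine eventually_exists_scale_of_exponents ω₀ hc₀ (γ := 1 - 2 * a) (β := 1 - a)
      (by linarith) (by linarith) (by linarith) ?_
    rw [show 2 * s + 2 * α = 0 by linarith, div_zero]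
    ring
  · refine eventually_exists_scale_of_exponents ω₀ hc₀ (γ := 2 * s + 2 * α) (β := s + 1 / 2)
      (by linarith) (by linarith) (by linarith) ?_
    rw [mul_neg, mul_div_cancel₀ _ (by linarith : 2 * s + 2 * α ≠ 0)]
    ring

end Rate

end Deconvolution

open Deconvolution in
theorem stmt_6_general {g φ θ : ℝ → ℝ} {ω₀ L Cg α Cφ a s B : ℝ} (hg : IsProbDensity g)
    (hφ : Integrable φ) (hs : 0 ≤ s) (hα : 0 ≤ α) (hB : 0 < B) (hCφ : 0 < Cφ)
    (ha : s + α = 0 → a < 1 / 2)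
    (hg_diff : ∀ ω, ω₀ < ω → DifferentiableAt ℝ (ft g) ω)
    (hg_le : ∀ ω, ω₀ < ω → ‖ft g ω‖ ≤ Cg * (ω ^ 2 + 1) ^ (-(α / 2)))
    (hg_deriv_le : ∀ ω, ω₀ < ω → ‖deriv (ft g) ω‖ ≤ Cg * (ω ^ 2 + 1) ^ (-(α / 2)))
    (hphase : ∀ ω, ω₀ < ω → ft φ ω = ‖ft φ ω‖ * Complex.exp (θ ω * Complex.I))
    (hθ : ∀ ω, ω₀ < ω → DifferentiableAt ℝ θ ω) (hθ_le : ∀ ω, ω₀ < ω → |deriv θ ω| ≤ L)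
    (hφ_ge : ∀ ω, ω₀ < ω → Cφ * (ω ^ 2 + 1) ^ (-(a / 2)) ≤ ‖ft φ ω‖) :
    ∃ C > 0, ∀ᶠ n : ℕ in Filter.atTop, ∀ T : (Fin n → ℝ) → ℂ, AEStronglyMeasurable T →
      ∃ f, IsProbDensity f ∧ f ∈ SobolevBall s B ∧ Integrable (ft f) ∧
        ENNReal.ofReal (C * (n : ℝ) ^ (-((2 * s + 2 * a - 1) / (2 * s + 2 * α)))) ≤
          quadraticRisk g φ T f := by
  obtain ⟨K, hK, hbump⟩ := exists_isC1Bump_spectralBump hθ hθ_le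
  obtain ⟨c, hc, hrisk⟩ := exists_le_quadraticRisk_of_isAdmissiblePerturbation hg hφ hs hB
  obtain ⟨c₀, hc₀, hadmissible⟩ := exists_isAdmissiblePerturbation_realSynthesis hg.integrable
    hs hα hg_diff hg_le hg_deriv_le hK hc
  set k := Real.exp (-2) * 5 ^ (-(|a| / 2)) * Cφ
  refine ⟨k ^ 2 * c₀ / 32, by positivity, ?_⟩
  filter_upwards [eventually_exists_scale ω₀ hs hα ha hc₀] with n hscale T hT
  obtain ⟨m, A, hω₀, hm, hA, hsobolev, hχ, hrate⟩ := hscale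
  have hV := hbump m A hω₀ hm hA
  obtain ⟨f, hf, hfB, hft, hle⟩ :=
    hrisk m hm n _ (hadmissible n m A _ hω₀ hm hV hsobolev hχ) T hT
  refine ⟨f, hf, hfB, hft, le_trans (ENNReal.ofReal_le_ofReal ?_) hle⟩
  have hΦ := pow_le_pow_left₀ (by positivity)
    (le_norm_linearFunctional_realSynthesis hφ hω₀ hm hA hV hphase hCφ.le hφ_ge) 2
  rw [mul_pow, hrate] at hΦ
  linarith

theorem stmt_6 (g φ : ℝ → ℝ)
    (hg_nonneg : ∀ x, 0 ≤ g x) (hg_int : Integrable g) (hg_one : (∫ x, g x) = 1)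
    (hg_bdd : BddAbove (Set.range g))
    (Cg : ℝ) (gd : ℝ → ℂ)
    (hgd : ∀ ω : ℝ, HasDerivAt (ft g) (gd ω) ω)
    (hgd_bdd : ∀ ω : ℝ, ‖gd ω‖ ≤ Cg * ‖ft g ω‖)
    (ω₀ ρbar : ℝ) (hω₀ : 0 < ω₀)
    (ρ ρ' ρ'' : ℝ → ℝ)
    (hρ_arg : ∀ ω : ℝ, ω₀ < |ω| → ρ ω = (ft φ ω).arg)
    (hρ'deriv : ∀ ω : ℝ, ω₀ < |ω| → HasDerivAt ρ (ρ' ω) ω)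
    (hρ''deriv : ∀ ω : ℝ, ω₀ < |ω| → HasDerivAt ρ' (ρ'' ω) ω)
    (hρ''cont : ContinuousOn ρ'' {ω : ℝ | ω₀ < |ω|})
    (hρbdd : ∀ ω : ℝ, ω₀ < |ω| → |ρ ω| ≤ ρbar ∧ |ρ' ω| ≤ ρbar ∧ |ρ'' ω| ≤ ρbar)
    (Cg2 α : ℝ) (hCg2 : 0 < Cg2) (hα : 0 ≤ α)
    (hgup : ∀ ω : ℝ, ‖ft g ω‖ ≤ Cg2 * (ω ^ 2 + 1) ^ (-(α / 2)))
    (Cφ1 a : ℝ) (hCφ1 : 0 < Cφ1) (ha : a < α + 1 / 2)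
    (hφlow : ∀ ω : ℝ, Cφ1 * (ω ^ 2 + 1) ^ (-(a / 2)) ≤ ‖ft φ ω‖) :
    ∀ s B : ℝ, 0 ≤ s → 0 < B →
      ∃ C : ℝ, 0 < C ∧ ∃ N : ℕ, ∀ n : ℕ, N ≤ n →
        ∀ T : (Fin n → ℝ) → ℂ, Measurable T →
          ∃ f : ℝ → ℝ, (∀ x, 0 ≤ f x) ∧ Integrable f ∧ (∫ x, f x) = 1 ∧
            (∫ ω : ℝ, ‖ft f ω‖ ^ 2 * (ω ^ 2 + 1) ^ s) ≤ B ^ 2 ∧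
            Integrable (fun ω : ℝ => ‖ft f ω‖ * ‖ft φ ω‖) ∧
            ENNReal.ofReal (C * (n : ℝ) ^ (-((2 * s + 2 * a - 1) / (2 * s + 2 * α)))) ≤
              ∫⁻ y : Fin n → ℝ,
                ENNReal.ofReal
                  (‖T y - (1 / (2 * Real.pi) : ℂ) * ∫ ω : ℝ, ft f ω * ft φ (-ω)‖ ^ 2 *
                    ∏ i : Fin n, (∫ θ : ℝ, g (y i - θ) * f θ)) := by
  intro s B hs hB
  have hphase (ω : ℝ) (hω : ω₀ < ω) : ft φ ω = ‖ft φ ω‖ * Complex.exp (ρ ω * Complex.I) := by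
    rw [hρ_arg ω (hω.trans_le (le_abs_self ω)), Complex.norm_mul_exp_arg_mul_I]
  have hderiv (ω : ℝ) (hω : ω₀ < ω) := hρ'deriv ω (hω.trans_le (le_abs_self ω))
  have hφ : Integrable φ := Deconvolution.integrable_of_ft_ne_zero (ω := 0) <|
    norm_pos_iff.1 (lt_of_lt_of_le (by positivity) (hφlow 0))
  obtain ⟨C, hC, hrisk⟩ := stmt_6_general (L := ρbar) (Cg := (|Cg| + 1) * Cg2)
    ⟨hg_nonneg, hg_int, hg_one⟩ hφ hs hα hB hCφ1 (fun h => by linarith)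
    (fun ω _ => (hgd ω).differentiableAt)
    (fun ω _ => by nlinarith [hgup ω, norm_nonneg (ft g ω), abs_nonneg Cg])
    (fun ω _ => by
      rw [(hgd ω).deriv]
      nlinarith [hgd_bdd ω, hgup ω, norm_nonneg (ft g ω), le_abs_self Cg, abs_nonneg Cg])
    hphase (fun ω hω => (hderiv ω hω).differentiableAt)
    (fun ω hω => (hderiv ω hω).deriv ▸ (hρbdd ω (hω.trans_le (le_abs_self ω))).2.1)
    (fun ω _ => hφlow ω)
  obtain ⟨N, hN⟩ := Filter.eventually_atTop.1 hrisk
  refine ⟨C, hC, N, fun n hn T hT => ?_⟩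
  obtain ⟨f, hf, hfB, hft, hle⟩ := hN n hn T hT.aestronglyMeasurable
  simp only [Deconvolution.quadraticRisk, Deconvolution.linearFunctional,
    Deconvolution.convolution_apply] at hle
  exact ⟨f, hf.nonneg, hf.integrable, hf.integral_eq_one, hfB.2,
    Deconvolution.integrable_norm_ft_mul_norm_ft hft hφ, hle⟩
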